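/- Let b > 0 be real with b² irrational, let x ∈ ℝ, let 0 < δ < min(b,b⁻¹), and let γ_δ be the contour consisting of the real axis with the segment [−δ, δ] replaced by the semicircle of radius δ below the origin. Then the improper contour integral lim_{R,R'→∞} ∫_{γ_δ, −R ≤ Re y ≤ R'} e^{−2πixy}·e^{2πic_b y} / e_b(−y − c_b) dy exists, is independent of δ, and equals ζ₀·e_b(x), where ζ₀ := e^{πi(1−4c_b²)/12}. (Here e_b(−y−c_b) is understood via the meromorphic continuation of e_b; the only zero of e_b(−y−c_b) near γ_δ is the simple zero at y = 0.) -/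

import Mathlib

open MeasureTheory Complex Real Filter Topology

noncomputable section

/-- The special point `c_b = i(b+b⁻¹)/2`. -/
def cb (b : ℝ) : ℂ := Complex.I * ((b : ℂ) + (b : ℂ)⁻¹) / 2

/-- The integrand in the integral representation of the noncompact quantum dilogarithm. -/
def ebIntegrand (b ε : ℝ) (z : ℂ) (t : ℝ) : ℂ :=
  Complex.exp (-2 * Complex.I * z * ((t : ℂ) + Complex.I * (ε : ℂ))) /
    (((t : ℂ) + Complex.I * (ε : ℂ)) *
      Complex.sinh ((b : ℂ) * ((t : ℂ) + Complex.I * (ε : ℂ))) *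
      Complex.sinh ((b : ℂ)⁻¹ * ((t : ℂ) + Complex.I * (ε : ℂ))))

/-- The noncompact quantum dilogarithm defined with contour parameter `ε`. -/
def ebE (b ε : ℝ) (z : ℂ) : ℂ :=
  Complex.exp ((1 / 4 : ℂ) * ∫ t : ℝ, ebIntegrand b ε z t)

/-- The noncompact quantum dilogarithm `e_b` (canonical choice of contour parameter;
the value is independent of this choice). -/
def eb (b : ℝ) (z : ℂ) : ℂ := ebE b (π * min b b⁻¹ / 2) z

/-- The set `{c_b + i(mb + nb⁻¹) : m, n ∈ ℤ≥0}` of poles of the continuation of `e_b`. -/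
def ebPoles (b : ℝ) : Set ℂ :=
  {z | ∃ m n : ℕ, z = cb b + Complex.I * ((m : ℂ) * (b : ℂ) + (n : ℂ) * (b : ℂ)⁻¹)}

/-- The constant `ζ₀ = e^{πi(1−4c_b²)/12}`. -/
def zeta0 (b : ℝ) : ℂ := Complex.exp ((π : ℂ) * Complex.I * (1 - 4 * (cb b) ^ 2) / 12)

/-!
Up to a constant, the inversion formula for `e_b(z) e_b(-z)` turns the integrand into
`e^{-2πixy} e^{-πiy²} e_b(y + c_b)`, whose only singularities lie on `i[0, ∞)`. The contour `γ_δ`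
can therefore be replaced by a staircase that comes in at height `(b + b⁻¹)/2`, where the integrand
decays exponentially as `Re y → -∞`, steps down to a small negative height `η` before reaching the
imaginary axis, and passes below `0`. Translating this staircase by `ib` and `ib⁻¹` shows that the
integral, as a function of `x` in the strip `|Im x| < (b + b⁻¹)/2`, satisfies the same two shift
equations as `e_b`. Its quotient by `e_b` has the two periods `ib` and `ib⁻¹`, which are
incommensurable because `b²` is irrational, so it is constant. As `x → +∞`, completing the square
turns the integral into a Gaussian one, which determines the constant.
-/

/-! ### Integrals along two lines separated by a pole -/

/-- The closed strip `|Im w| ≤ ε`. -/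
def closedStrip (ε : ℝ) : Set ℂ := {w | |w.im| ≤ ε}

/-- The filter of the two ends `Re w → ±∞` of the closed strip `|Im w| ≤ ε`. -/
def stripEnds (ε : ℝ) : Filter ℂ := comap (fun w : ℂ => |w.re|) atTop ⊓ 𝓟 (closedStrip ε)

/-- The integral of `h` along the segment from `-T + iη` to `T + iη`. -/
def segmentIntegral (h : ℂ → ℂ) (η T : ℝ) : ℂ := ∫ t in -T..T, h (t + η * I)

/-- The integral of `h` along the top side of the rectangle `[-T, T] × [-ε, ε]` minus the integral
along its bottom side, both oriented from left to right. -/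
def lineGap (h : ℂ → ℂ) (ε T : ℝ) : ℂ := segmentIntegral h ε T - segmentIntegral h (-ε) T

section LineGap

variable {ε : ℝ}

lemma closedStrip_mem_nhds_zero (hε : 0 < ε) : closedStrip ε ∈ 𝓝 (0 : ℂ) := by
  have hcont : ContinuousAt (fun w : ℂ => |w.im|) 0 := by fun_prop
  exact (hcont.eventually_lt_const (by simpa using hε)).mono fun w hw => le_of_lt hw

lemma add_mul_I_ne_zero {η : ℝ} (hη : η ≠ 0) (t : ℝ) : (t + η * I : ℂ) ≠ 0 := fun h =>
  hη (by simpa using congrArg Complex.im h)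

lemma tendsto_stripEnds_iff {f : ℂ → ℂ} : Tendsto f (stripEnds ε) (𝓝 0) ↔
    ∀ c > 0, ∃ T, ∀ w ∈ closedStrip ε, T ≤ |w.re| → ‖f w‖ < c := by
  have hbasis := ((atTop_basis (α := ℝ)).comap fun w : ℂ => |w.re|).inf_principal (closedStrip ε)
  rw [stripEnds, hbasis.tendsto_iff Metric.nhds_basis_ball]
  simp only [true_and, Set.mem_inter_iff, Set.mem_preimage, Set.mem_Ici, mem_ball_zero_iff,
    and_imp]
  exact forall₂_congr fun c _ => exists_congr fun T =>
    ⟨fun h w hw hT => h w hT hw, fun h w hT hw => h w hw hT⟩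

lemma tendsto_inv_pow_stripEnds (ε : ℝ) {n : ℕ} (hn : n ≠ 0) :
    Tendsto (fun w : ℂ => (w ^ n)⁻¹) (stripEnds ε) (𝓝 0) := by
  have hnorm : Tendsto (fun w : ℂ => ‖w‖) (stripEnds ε) atTop :=
    tendsto_atTop_mono Complex.abs_re_le_norm (tendsto_comap.mono_left inf_le_left)
  refine tendsto_inv₀_cobounded.comp (tendsto_norm_atTop_iff_cobounded.mp ?_)
  simpa only [norm_pow, Function.comp_def] using (tendsto_pow_atTop hn).comp hnorm

lemma tendsto_stripEnds_of_tendsto_abs {η : ℝ} (hη : |η| ≤ ε) {u : ℝ → ℝ}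
    (hu : Tendsto (fun T => |u T|) atTop atTop) :
    Tendsto (fun T => (u T + η * I : ℂ)) atTop (stripEnds ε) :=
  tendsto_inf.mpr ⟨tendsto_comap_iff.mpr (by simpa [Function.comp_def] using hu),
    tendsto_principal.mpr (Eventually.of_forall fun T => by simpa [closedStrip] using hη)⟩

lemma tendsto_real_stripEnds {η : ℝ} (hη : |η| ≤ ε) :
    Tendsto (fun T : ℝ => (T + η * I : ℂ)) atTop (stripEnds ε) :=
  tendsto_stripEnds_of_tendsto_abs (u := id) hη tendsto_abs_atTop_atTop

lemma tendsto_neg_real_stripEnds {η : ℝ} (hη : |η| ≤ ε) :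
    Tendsto (fun T : ℝ => (((-T : ℝ) : ℂ) + η * I : ℂ)) atTop (stripEnds ε) :=
  tendsto_stripEnds_of_tendsto_abs (u := fun T => -T) hη
    (by simpa only [abs_neg] using tendsto_abs_atTop_atTop)

lemma continuous_horizontal {h : ℂ → ℂ} {η : ℝ} (hη : |η| ≤ ε) (hη0 : η ≠ 0)
    (hh : ContinuousOn h (closedStrip ε \ {0})) : Continuous fun t : ℝ => h (t + η * I) :=
  hh.comp_continuous (by fun_prop) fun t =>
    ⟨by simpa [closedStrip] using hη, by simpa using add_mul_I_ne_zero hη0 t⟩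

lemma lineGap_add (hε : 0 < ε) {h₁ h₂ : ℂ → ℂ} (hc₁ : ContinuousOn h₁ (closedStrip ε \ {0}))
    (hc₂ : ContinuousOn h₂ (closedStrip ε \ {0})) (T : ℝ) :
    lineGap (fun w => h₁ w + h₂ w) ε T = lineGap h₁ ε T + lineGap h₂ ε T := by
  have hadd : ∀ η : ℝ, |η| ≤ ε → η ≠ 0 →
      segmentIntegral (fun w => h₁ w + h₂ w) η T =
        segmentIntegral h₁ η T + segmentIntegral h₂ η T :=
    fun η hη hη0 => intervalIntegral.integral_add
      ((continuous_horizontal hη hη0 hc₁).intervalIntegrable _ _)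
      ((continuous_horizontal hη hη0 hc₂).intervalIntegrable _ _)
  rw [lineGap, hadd ε (abs_of_pos hε).le hε.ne',
    hadd (-ε) (by rw [abs_neg, abs_of_pos hε]) (neg_ne_zero.mpr hε.ne'), lineGap, lineGap]
  ring

lemma lineGap_const_mul (a : ℂ) (h : ℂ → ℂ) (ε T : ℝ) :
    lineGap (fun w => a * h w) ε T = a * lineGap h ε T := by
  simp only [lineGap, segmentIntegral, intervalIntegral.integral_const_mul, mul_sub]

lemma lineGap_congr (hε : 0 < ε) {h₁ h₂ : ℂ → ℂ} (h : ∀ w ≠ 0, h₁ w = h₂ w) (T : ℝ) :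
    lineGap h₁ ε T = lineGap h₂ ε T := by
  simp only [lineGap, segmentIntegral, h _ (add_mul_I_ne_zero hε.ne' _),
    h _ (add_mul_I_ne_zero (neg_ne_zero.mpr hε.ne') _)]

lemma lineGap_eq_vertical (hε : 0 ≤ ε) {ρ : ℂ → ℂ} (hρ : DifferentiableOn ℂ ρ (closedStrip ε))
    (T : ℝ) : lineGap ρ ε T =
      I * (∫ s in -ε..ε, ρ (T + s * I)) - I * ∫ s in -ε..ε, ρ (((-T : ℝ) : ℂ) + s * I) := by
  have hrect := Complex.integral_boundary_rect_eq_zero_of_differentiableOn ρ (⟨-T, -ε⟩ : ℂ) ⟨T, ε⟩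
    (hρ.mono fun w hw => abs_le.mpr (by
      simpa only [Set.uIcc_of_le (neg_le_self hε), Set.mem_Icc] using (mem_reProdIm.mp hw).2))
  simp only [smul_eq_mul] at hrect
  rw [lineGap, segmentIntegral, segmentIntegral]
  linear_combination -hrect

theorem tendsto_lineGap_of_differentiableOn (hε : 0 ≤ ε) {ρ : ℂ → ℂ}
    (hρ : DifferentiableOn ℂ ρ (closedStrip ε)) (hρ0 : Tendsto ρ (stripEnds ε) (𝓝 0)) :
    Tendsto (lineGap ρ ε) atTop (𝓝 0) := by
  rw [Metric.tendsto_nhds]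
  intro c hc
  obtain ⟨T₀, hT₀⟩ := tendsto_stripEnds_iff.mp hρ0 (c / (4 * ε + 1)) (by positivity)
  have hside : ∀ T : ℝ, T₀ ≤ |T| →
      ‖∫ s in -ε..ε, ρ (T + s * I)‖ ≤ c / (4 * ε + 1) * (2 * ε) := by
    intro T hT
    have hle := intervalIntegral.norm_integral_le_of_norm_le_const (a := -ε) (b := ε)
      (f := fun s => ρ (T + s * I)) fun s hs => (hT₀ (T + s * I) (by
        rw [Set.uIoc_of_le (neg_le_self hε)] at hs
        simpa [closedStrip] using abs_le.mpr ⟨hs.1.le, hs.2⟩) (by simpa using hT)).le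
    rwa [show ε - -ε = 2 * ε by ring, abs_of_nonneg (by positivity : 0 ≤ 2 * ε)] at hle
  filter_upwards [eventually_ge_atTop T₀] with T hT
  rw [dist_zero_right, lineGap_eq_vertical hε hρ]
  have hnorm : ∀ u v : ℂ, ‖I * u - I * v‖ ≤ ‖u‖ + ‖v‖ := fun u v => by
    simpa using norm_sub_le (I * u) (I * v)
  calc _ ≤ c / (4 * ε + 1) * (2 * ε) + c / (4 * ε + 1) * (2 * ε) :=
        (hnorm _ _).trans (add_le_add (hside T (hT.trans (le_abs_self T)))
          (hside (-T) (hT.trans ((le_abs_self T).trans_eq (abs_neg T).symm))))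
    _ = c * (4 * ε / (4 * ε + 1)) := by ring
    _ < c := mul_lt_of_lt_one_right hc (by rw [div_lt_one (by positivity)]; linarith)

theorem tendsto_lineGap_of_hasDerivAt (hε : 0 < ε) {h H : ℂ → ℂ}
    (hh : ContinuousOn h (closedStrip ε \ {0})) (hH : ∀ w ≠ 0, HasDerivAt H (h w) w)
    (hH0 : Tendsto H (stripEnds ε) (𝓝 0)) : Tendsto (lineGap h ε) atTop (𝓝 0) := by
  have hline : ∀ η : ℝ, |η| ≤ ε → η ≠ 0 → Tendsto (segmentIntegral h η) atTop (𝓝 0) := by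
    intro η hη hη0
    have hseg : ∀ T : ℝ,
        H (T + η * I) - H (((-T : ℝ) : ℂ) + η * I) = segmentIntegral h η T := fun T =>
      (intervalIntegral.integral_eq_sub_of_hasDerivAt (f := fun t : ℝ => H (t + η * I))
        (fun t _ => by
          simpa using ((hH _ (add_mul_I_ne_zero hη0 t)).comp (t : ℂ)
            ((hasDerivAt_id (t : ℂ)).add_const (η * I))).comp_ofReal)
        ((continuous_horizontal hη hη0 hh).intervalIntegrable _ _)).symm
    exact ((sub_zero (0 : ℂ)) ▸ (hH0.comp (tendsto_real_stripEnds hη)).sub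
      (hH0.comp (tendsto_neg_real_stripEnds hη))).congr hseg
  exact (sub_zero (0 : ℂ)) ▸ (hline ε (abs_of_pos hε).le hε.ne').sub
    (hline (-ε) (by rw [abs_neg, abs_of_pos hε]) (neg_ne_zero.mpr hε.ne'))

lemma tendsto_lineGap_inv_pow (hε : 0 < ε) (n : ℕ) :
    Tendsto (lineGap (fun w => (w ^ (n + 2))⁻¹) ε) atTop (𝓝 0) := by
  have hn : ((n + 1 : ℕ) : ℂ) ≠ 0 := by exact_mod_cast n.succ_ne_zero
  refine tendsto_lineGap_of_hasDerivAt hε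
    (H := fun w => -((n + 1 : ℕ) : ℂ)⁻¹ * (w ^ (n + 1))⁻¹)
    (ContinuousOn.inv₀ (by fun_prop) fun w hw => pow_ne_zero _ hw.2) (fun w hw => ?_) ?_
  · refine (((hasDerivAt_pow (n + 1) w).inv (pow_ne_zero _ hw)).const_mul
      (-((n + 1 : ℕ) : ℂ)⁻¹)).congr_deriv ?_
    field_simp
    rw [Nat.add_sub_cancel]
    ring
  · simpa only [mul_zero] using
      (tendsto_inv_pow_stripEnds ε n.succ_ne_zero).const_mul (-((n + 1 : ℕ) : ℂ)⁻¹)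

lemma tendsto_lineGap_inv (hε : 0 < ε) :
    Tendsto (lineGap (fun w => w⁻¹) ε) atTop (𝓝 (-2 * π * I)) := by
  have hcont : ∀ η : ℝ, η ≠ 0 → Continuous fun t : ℝ => ((t : ℂ) + η * I)⁻¹ := fun η hη =>
    Continuous.inv₀ (by fun_prop) fun t => add_mul_I_ne_zero hη t
  have hdiff : ∀ t : ℝ, ((t : ℂ) + ε * I)⁻¹ - ((t : ℂ) + ((-ε : ℝ) : ℂ) * I)⁻¹ =
      -2 * ε * I * (((ε ^ 2 + t ^ 2)⁻¹ : ℝ) : ℂ) := fun t => by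
    have hp := add_mul_I_ne_zero hε.ne' t
    have hm := add_mul_I_ne_zero (neg_ne_zero.mpr hε.ne') t
    have hprod : ((t : ℂ) + ε * I) * ((t : ℂ) + ((-ε : ℝ) : ℂ) * I) = ε ^ 2 + t ^ 2 := by
      push_cast
      linear_combination (-(ε : ℂ) ^ 2) * I_sq
    push_cast at hm hprod ⊢
    rw [inv_sub_inv hp hm, hprod]
    ring
  have hgap : ∀ T : ℝ, lineGap (fun w => w⁻¹) ε T =
      -2 * I * ((Real.arctan (T / ε) : ℝ) - (Real.arctan (-T / ε) : ℝ)) := fun T => by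
    rw [lineGap, segmentIntegral, segmentIntegral, ← intervalIntegral.integral_sub
      ((hcont ε hε.ne').intervalIntegrable _ _)
      ((hcont (-ε) (neg_ne_zero.mpr hε.ne')).intervalIntegrable _ _)]
    simp only [hdiff]
    rw [intervalIntegral.integral_const_mul, intervalIntegral.integral_ofReal,
      integral_inv_sq_add_sq hε.ne']
    have hε' : (ε : ℂ) ≠ 0 := by exact_mod_cast hε.ne'
    push_cast
    field_simp
  have harctan : Tendsto (fun T : ℝ => Real.arctan (T / ε)) atTop (𝓝 (π / 2)) :=
    (Real.tendsto_arctan_atTop.mono_right nhdsWithin_le_nhds).comp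
      (tendsto_id.atTop_div_const hε)
  have hsub := (((harctan.sub harctan.neg).ofReal).const_mul (-2 * I))
  refine (hsub.congr fun T => ?_).trans_eq ?_
  · rw [hgap, neg_div, Real.arctan_neg]
    push_cast
    ring
  · congr 1
    push_cast
    ring

lemma mul_dslope_zero (g : ℂ → ℂ) (w : ℂ) : w * dslope g 0 w = g w - g 0 := by
  simpa only [sub_zero, smul_eq_mul] using sub_smul_dslope g 0 w

lemma isBigO_one_of_continuousAt {g : ℂ → ℂ} (hg : ContinuousAt g 0) :
    g =O[𝓝[≠] 0] fun _ => (1 : ℂ) :=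
  (hg.norm.isBoundedUnder_le.isBigO_one ℂ).mono nhdsWithin_le_nhds

lemma eq_zero_coeff_of_isLittleO {g : ℂ → ℂ} (hg : ContinuousAt g 0) {a : ℕ → ℂ} {n : ℕ}
    (h : (fun w => g w - ∑ k ∈ Finset.range (n + 1), a k * w ^ k) =o[𝓝[≠] 0] (· ^ n)) :
    g 0 = a 0 := by
  have hzero := Asymptotics.isLittleO_one_iff ℂ |>.mp 
    (h.trans_isBigO (isBigO_one_of_continuousAt (continuous_pow n).continuousAt))
  have hval : ContinuousAt (fun w => g w - ∑ k ∈ Finset.range (n + 1), a k * w ^ k) 0 := by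
    fun_prop
  have := tendsto_nhds_unique hzero (hval.tendsto.mono_left nhdsWithin_le_nhds)
  simp only [Finset.sum_range_succ', ne_eq, Nat.add_eq_zero_iff, one_ne_zero, and_false,
    not_false_eq_true, zero_pow, mul_zero, Finset.sum_const_zero, zero_add, pow_zero,
    mul_one] at this
  exact (sub_eq_zero.mp this.symm)

lemma isLittleO_dslope_zero {g : ℂ → ℂ} (hg : ContinuousAt g 0) {a : ℕ → ℂ} {n : ℕ}
    (h : (fun w => g w - ∑ k ∈ Finset.range (n + 2), a k * w ^ k) =o[𝓝[≠] 0] (· ^ (n + 1))) :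
    (fun w => dslope g 0 w - ∑ k ∈ Finset.range (n + 1), a (k + 1) * w ^ k) =o[𝓝[≠] 0]
      (· ^ n) := by
  have hg0 : g 0 = a 0 := eq_zero_coeff_of_isLittleO hg h
  have hw : ∀ᶠ w : ℂ in 𝓝[≠] 0, w ≠ 0 := self_mem_nhdsWithin
  refine ((Asymptotics.isBigO_refl (fun w : ℂ => w⁻¹) _).mul_isLittleO h).congr' ?_ ?_
  · filter_upwards [hw] with w hw
    rw [inv_mul_eq_iff_eq_mul₀ hw, mul_sub, mul_dslope_zero, hg0, Finset.sum_range_succ',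
      Finset.mul_sum]
    simp only [pow_succ']
    rw [pow_zero, mul_one, sub_add_eq_sub_sub, sub_right_comm]
    congr 1
    exact Finset.sum_congr rfl fun k _ => by ring
  · filter_upwards [hw] with w hw
    rw [pow_succ', inv_mul_cancel_left₀ hw]

lemma div_pow_succ_eq (g : ℂ → ℂ) (m : ℕ) {w : ℂ} (hw : w ≠ 0) :
    g w / w ^ (m + 1) = g 0 * (w ^ (m + 1))⁻¹ + dslope g 0 w / w ^ m := by
  have hslope := mul_dslope_zero g w
  field_simp
  linear_combination -w ^ m * hslope

lemma tendsto_dslope_div_pow {g : ℂ → ℂ} {m : ℕ}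
    (h : Tendsto (fun w => g w / w ^ (m + 1)) (stripEnds ε) (𝓝 0)) :
    Tendsto (fun w => dslope g 0 w / w ^ m) (stripEnds ε) (𝓝 0) := by
  have hne : ∀ᶠ w in stripEnds ε, w ≠ 0 := by
    refine (tendsto_comap.mono_left inf_le_left).eventually_gt_atTop (0 : ℝ) |>.mono fun w hw => ?_
    rintro rfl
    simp at hw
  have hsub := h.sub ((tendsto_inv_pow_stripEnds ε m.succ_ne_zero).const_mul (g 0))
  rw [mul_zero, sub_zero] at hsub
  refine hsub.congr' (hne.mono fun w hw => ?_)
  rw [div_pow_succ_eq g m hw, add_sub_cancel_left]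

lemma lineGap_div_pow_succ (hε : 0 < ε) {g : ℂ → ℂ} (hg : DifferentiableOn ℂ g (closedStrip ε))
    (m : ℕ) (T : ℝ) : lineGap (fun w => g w / w ^ (m + 1)) ε T =
      g 0 * lineGap (fun w => (w ^ (m + 1))⁻¹) ε T +
        lineGap (fun w => dslope g 0 w / w ^ m) ε T := by
  have hslope := (Complex.differentiableOn_dslope (closedStrip_mem_nhds_zero hε)).mpr hg
  rw [← lineGap_const_mul, ← lineGap_add hε, lineGap_congr hε fun w hw => div_pow_succ_eq g m hw]
  · exact continuousOn_const.mul
      (ContinuousOn.inv₀ (by fun_prop) fun w hw => pow_ne_zero _ hw.2)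
  · exact (hslope.continuousOn.mono Set.sdiff_subset).div (by fun_prop)
      fun w hw => pow_ne_zero _ hw.2

/-- The residue theorem on an infinite strip, for a pole at `0` of order at most `n + 1`: the
residue of `g w / w ^ (n + 1)` is the Taylor coefficient `a n` of `g`. -/
theorem tendsto_lineGap_div_pow (hε : 0 < ε) {n : ℕ} {g : ℂ → ℂ} {a : ℕ → ℂ}
    (hg : DifferentiableOn ℂ g (closedStrip ε))
    (hga : (fun w => g w - ∑ k ∈ Finset.range (n + 1), a k * w ^ k) =o[𝓝[≠] 0] (· ^ n))
    (hg0 : Tendsto (fun w => g w / w ^ (n + 1)) (stripEnds ε) (𝓝 0)) :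
    Tendsto (lineGap (fun w => g w / w ^ (n + 1)) ε) atTop (𝓝 (-2 * π * I * a n)) := by
  induction n generalizing g a with
  | zero =>
    have hnhds := closedStrip_mem_nhds_zero hε
    have hslope := tendsto_lineGap_of_differentiableOn hε.le
      ((Complex.differentiableOn_dslope hnhds).mpr hg)
      (by simpa only [pow_zero, div_one] using tendsto_dslope_div_pow hg0)
    have hsum := ((tendsto_lineGap_inv hε).const_mul (g 0)).add hslope
    rw [eq_zero_coeff_of_isLittleO (hg.continuousOn.continuousAt hnhds) hga, add_zero,
      mul_comm] at hsum
    refine hsum.congr fun T => ?_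
    rw [lineGap_div_pow_succ hε hg,
      eq_zero_coeff_of_isLittleO (hg.continuousOn.continuousAt hnhds) hga]
    simp only [zero_add, pow_one, pow_zero, div_one]
  | succ n ih =>
    have hnhds := closedStrip_mem_nhds_zero hε
    have hslope := ih ((Complex.differentiableOn_dslope hnhds).mpr hg)
      (isLittleO_dslope_zero (hg.continuousOn.continuousAt hnhds) hga)
      (tendsto_dslope_div_pow hg0)
    have hsum := ((tendsto_lineGap_inv_pow hε n).const_mul (g 0)).add hslope
    rw [mul_zero, zero_add] at hsum
    exact hsum.congr fun T => (lineGap_div_pow_succ hε hg (n + 1) T).symm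

end LineGap

/-! ### The integral representation of `e_b` and the inversion formula -/

section Sinh

lemma norm_sinh_sq (u : ℂ) : ‖Complex.sinh u‖ ^ 2 = Real.sinh u.re ^ 2 + Real.sin u.im ^ 2 := by
  have hsinh : Complex.sinh u = ((Real.sinh u.re * Real.cos u.im : ℝ) : ℂ) +
      ((Real.cosh u.re * Real.sin u.im : ℝ) : ℂ) * I := by
    conv_lhs => rw [← Complex.re_add_im u]
    rw [Complex.sinh_add, Complex.cosh_mul_I, Complex.sinh_mul_I]
    push_cast
    ring
  rw [hsinh, Complex.sq_norm, Complex.normSq_add_mul_I]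
  linear_combination Real.sin u.im ^ 2 * Real.cosh_sq u.re +
    Real.sinh u.re ^ 2 * Real.sin_sq_add_cos_sq u.im

lemma abs_sinh_re_le_norm_sinh (u : ℂ) : |Real.sinh u.re| ≤ ‖Complex.sinh u‖ :=
  abs_le_of_sq_le_sq (by linarith [norm_sinh_sq u, sq_nonneg (Real.sin u.im)]) (norm_nonneg _)

lemma cosh_re_mul_sin_im_le_norm_sinh (u : ℂ) :
    Real.cosh u.re * Real.sin u.im ≤ ‖Complex.sinh u‖ := by
  refine le_of_sq_le_sq ?_ (norm_nonneg _)
  rw [norm_sinh_sq, mul_pow, Real.cosh_sq]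
  nlinarith [Real.sin_sq_le_one u.im, sq_nonneg (Real.sinh u.re)]

lemma sinh_ne_zero_of_abs_im_lt_pi {u : ℂ} (hu : u ≠ 0) (him : |u.im| < π) :
    Complex.sinh u ≠ 0 := by
  intro hzero
  have hsq := norm_sinh_sq u
  rw [hzero, norm_zero, zero_pow two_ne_zero] at hsq
  have hre : Real.sinh u.re = 0 := by nlinarith [sq_nonneg (Real.sin u.im)]
  have hsin : Real.sin u.im = 0 := by nlinarith [sq_nonneg (Real.sinh u.re)]
  exact hu (Complex.ext (Real.sinh_eq_zero.mp hre)
    ((Real.sin_eq_zero_iff_of_lt_of_lt (abs_lt.mp him).1 (abs_lt.mp him).2).mp hsin))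

lemma exp_abs_div_two_le_cosh (x : ℝ) : rexp |x| / 2 ≤ Real.cosh x := by
  rw [← Real.cosh_abs, Real.cosh_eq]
  linarith [Real.exp_pos (-|x|)]

lemma exp_abs_div_four_le_abs_sinh {x : ℝ} (hx : 1 ≤ |x|) :
    rexp |x| / 4 ≤ |Real.sinh x| := by
  rw [Real.abs_sinh, Real.sinh_eq]
  have hneg : rexp (-|x|) ≤ 1 := Real.exp_le_one_iff.mpr (by linarith)
  linarith [Real.add_one_le_exp |x|]

/-- The entire function `sinh u / u`, with value `1` at `0`. -/
def sinhc (u : ℂ) : ℂ := dslope Complex.sinh 0 u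

lemma mul_sinhc (u : ℂ) : u * sinhc u = Complex.sinh u := by
  rw [sinhc, mul_dslope_zero, Complex.sinh_zero, sub_zero]

lemma sinhc_zero : sinhc 0 = 1 := by
  rw [sinhc, dslope_same, Complex.deriv_sinh, Complex.cosh_zero]

lemma differentiable_sinhc : Differentiable ℂ sinhc :=
  differentiableOn_univ.mp ((Complex.differentiableOn_dslope univ_mem).mpr
    Complex.differentiable_sinh.differentiableOn)

lemma sinhc_ne_zero {u : ℂ} (him : |u.im| < π) : sinhc u ≠ 0 := by
  rcases eq_or_ne u 0 with rfl | hu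
  · exact sinhc_zero ▸ one_ne_zero
  · exact right_ne_zero_of_mul (mul_sinhc u ▸ sinh_ne_zero_of_abs_im_lt_pi hu him)

lemma sinh_sub_sum_isLittleO (n : ℕ) :
    (fun u : ℂ => Complex.sinh u -
      ∑ k ∈ Finset.range (n + 1), (1 - (-1) ^ k) / 2 / (k.factorial : ℂ) * u ^ k) =o[𝓝 0]
        (· ^ n) := by
  have hexp := Complex.exp_sub_sum_range_succ_isLittleO_pow n
  have hneg : (fun u : ℂ => Complex.exp (-u) -
      ∑ k ∈ Finset.range (n + 1), (-u) ^ k / (k.factorial : ℂ)) =o[𝓝 0] (· ^ n) := by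
    refine (hexp.comp_tendsto (k := fun u : ℂ => -u)
      (by simpa using (continuous_neg (G := ℂ)).tendsto 0)).trans_isBigO ?_
    exact Asymptotics.isBigO_of_le _ fun u => by simp
  refine ((hexp.sub hneg).const_mul_left (1 / 2 : ℂ)).congr_left fun u => ?_
  have hsum : ∀ k, (1 - (-1) ^ k) / 2 / (k.factorial : ℂ) * u ^ k =
      1 / 2 * (u ^ k / (k.factorial : ℂ) - (-u) ^ k / (k.factorial : ℂ)) := fun k => by
    rw [neg_pow u]
    ring
  simp only [hsum, ← Finset.mul_sum, Finset.sum_sub_distrib, Complex.sinh]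
  ring

lemma sinhc_sub_isLittleO : (fun u => sinhc u - (1 + u ^ 2 / 6)) =o[𝓝[≠] 0] (· ^ 2) := by
  refine (isLittleO_dslope_zero Complex.differentiable_sinh.continuous.continuousAt
    ((sinh_sub_sum_isLittleO 3).mono nhdsWithin_le_nhds)).congr_left fun u => ?_
  norm_num [sinhc, Finset.sum_range_succ, Nat.factorial]
  ring

lemma sinhc_const_mul_sub_isLittleO {p : ℂ} (hp : p ≠ 0) :
    (fun w => sinhc (p * w) - (1 + (p * w) ^ 2 / 6)) =o[𝓝[≠] 0] (· ^ 2) := by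
  have hmul : Tendsto (fun w => p * w) (𝓝[≠] 0) (𝓝[≠] 0) :=
    tendsto_nhdsWithin_iff.mpr ⟨((continuous_const_mul p).tendsto' 0 0 (mul_zero p)).mono_left
      nhdsWithin_le_nhds, eventually_mem_nhdsWithin.mono fun w hw => mul_ne_zero hp hw⟩
  refine (sinhc_sub_isLittleO.comp_tendsto hmul).trans_isBigO ?_
  simpa only [Function.comp_def, mul_pow] using
    (Asymptotics.isBigO_refl _ _).const_mul_left (p ^ 2)

end Sinh

section Inversion

variable {b : ℝ}

/-- The contour parameter used in the definition of `eb`. -/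
def contourParam (b : ℝ) : ℝ := π * min b b⁻¹ / 2

lemma contourParam_pos (hb : 0 < b) : 0 < contourParam b :=
  half_pos (mul_pos pi_pos (lt_min hb (inv_pos.mpr hb)))

lemma contourParam_inv (b : ℝ) : contourParam b⁻¹ = contourParam b := by
  rw [contourParam, contourParam, inv_inv, min_comm]

lemma mul_contourParam_lt_pi (hb : 0 < b) : b * contourParam b < π := by
  have hmin : b * min b b⁻¹ ≤ 1 :=
    (mul_le_mul_of_nonneg_left (min_le_right _ _) hb.le).trans_eq (mul_inv_cancel₀ hb.ne')
  calc b * contourParam b = π / 2 * (b * min b b⁻¹) := by rw [contourParam]; ring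
    _ < π := by nlinarith [Real.pi_pos]

lemma inv_mul_contourParam_lt_pi (hb : 0 < b) : b⁻¹ * contourParam b < π :=
  contourParam_inv b ▸ mul_contourParam_lt_pi (inv_pos.mpr hb)

lemma sin_mul_contourParam_pos (hb : 0 < b) : 0 < Real.sin (b * contourParam b) :=
  Real.sin_pos_of_pos_of_lt_pi (mul_pos hb (contourParam_pos hb)) (mul_contourParam_lt_pi hb)

lemma sin_inv_mul_contourParam_pos (hb : 0 < b) : 0 < Real.sin (b⁻¹ * contourParam b) :=
  contourParam_inv b ▸ sin_mul_contourParam_pos (inv_pos.mpr hb)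

lemma sin_mul_exp_le_norm_sinh {p : ℝ} (hp : 0 ≤ p) {w : ℂ} (hsin : 0 ≤ Real.sin (p * w.im)) :
    Real.sin (p * w.im) / 2 * rexp (p * |w.re|) ≤ ‖Complex.sinh (p * w)‖ := by
  have hcosh := exp_abs_div_two_le_cosh (p * w.re)
  rw [abs_mul, abs_of_nonneg hp] at hcosh
  have hnorm := cosh_re_mul_sin_im_le_norm_sinh (p * w)
  rw [re_ofReal_mul, im_ofReal_mul] at hnorm
  nlinarith

lemma exp_div_four_le_norm_sinh {p : ℝ} (hp : 0 ≤ p) {w : ℂ} (hw : 1 ≤ p * |w.re|) :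
    1 / 4 * rexp (p * |w.re|) ≤ ‖Complex.sinh (p * w)‖ := by
  have habs : |p * w.re| = p * |w.re| := by rw [abs_mul, abs_of_nonneg hp]
  have hsinh := exp_abs_div_four_le_abs_sinh (x := p * w.re) (habs ▸ hw)
  have hnorm := abs_sinh_re_le_norm_sinh (p * w)
  rw [re_ofReal_mul] at hnorm
  rw [habs] at hsinh
  linarith

/-- The integrand of the integral representation as a function of a complex variable. -/
def ebKernel (b : ℝ) (z w : ℂ) : ℂ :=
  Complex.exp (-2 * I * z * w) / (w * Complex.sinh (b * w) * Complex.sinh ((b : ℂ)⁻¹ * w))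

lemma ebIntegrand_eq_ebKernel (b ε : ℝ) (z : ℂ) (t : ℝ) :
    ebIntegrand b ε z t = ebKernel b z (t + ε * I) := by
  rw [ebIntegrand, ebKernel, mul_comm (ε : ℂ) I]

lemma ebKernel_neg_neg (b : ℝ) (z w : ℂ) : ebKernel b (-z) (-w) = -ebKernel b z w := by
  simp only [ebKernel, mul_neg, Complex.sinh_neg, neg_mul, neg_neg, div_neg]

lemma norm_ebKernel_le {z w : ℂ} {r s s' : ℝ} (hr : 0 < r) (hs : 0 < s)
    (hs' : 0 < s') (hw : r ≤ ‖w‖) (hsinh : s * rexp (b * |w.re|) ≤ ‖Complex.sinh (b * w)‖)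
    (hsinh' : s' * rexp (b⁻¹ * |w.re|) ≤ ‖Complex.sinh ((b : ℂ)⁻¹ * w)‖) :
    ‖ebKernel b z w‖ ≤ (r * s * s')⁻¹ * rexp (2 * (z.re * w.im)) *
      rexp (-((b + b⁻¹ - 2 * |z.im|) * |w.re|)) := by
  have hre : (-2 * I * z * w).re = 2 * (z.re * w.im) + 2 * (z.im * w.re) := by
    simp
    ring
  have him : z.im * w.re ≤ |z.im| * |w.re| := (le_abs_self _).trans_eq (abs_mul _ _)
  rw [ebKernel, norm_div, norm_mul, norm_mul, Complex.norm_exp, hre]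
  calc _ ≤ rexp (2 * (z.re * w.im) + 2 * (|z.im| * |w.re|)) /
        (r * (s * rexp (b * |w.re|)) * (s' * rexp (b⁻¹ * |w.re|))) := by gcongr
    _ = (r * s * s')⁻¹ * rexp (2 * (z.re * w.im)) * (rexp (2 * (|z.im| * |w.re|)) /
        (rexp (b * |w.re|) * rexp (b⁻¹ * |w.re|))) := by
      rw [Real.exp_add]
      field_simp
    _ = _ := by
      rw [← Real.exp_add, ← Real.exp_sub]
      congr 2
      ring

lemma exists_norm_ebIntegrand_le (hb : 0 < b) : ∃ C > 0, ∀ (z : ℂ) (t : ℝ),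
    ‖ebIntegrand b (contourParam b) z t‖ ≤ C * rexp (2 * contourParam b * z.re) *
      rexp (-((b + b⁻¹ - 2 * |z.im|) * |t|)) := by
  have hε := contourParam_pos hb
  have hs := sin_mul_contourParam_pos hb
  have hs' := sin_inv_mul_contourParam_pos hb
  refine ⟨(contourParam b * (Real.sin (b * contourParam b) / 2) *
    (Real.sin (b⁻¹ * contourParam b) / 2))⁻¹, by positivity, fun z t => ?_⟩
  have hre : ((t : ℂ) + contourParam b * I).re = t := by simp
  have him : ((t : ℂ) + contourParam b * I).im = contourParam b := by simp
  have hsinh := sin_mul_exp_le_norm_sinh hb.le (him.symm ▸ hs.le)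
  have hsinh' := sin_mul_exp_le_norm_sinh (inv_pos.mpr hb).le (him.symm ▸ hs'.le)
  rw [him] at hsinh hsinh'
  rw [Complex.ofReal_inv] at hsinh'
  have hnorm := (le_abs_self _).trans (Complex.abs_im_le_norm ((t : ℂ) + contourParam b * I))
  rw [him] at hnorm
  have hle := norm_ebKernel_le (z := z) hε (half_pos hs) (half_pos hs') hnorm hsinh hsinh'
  rw [hre, him] at hle
  rwa [ebIntegrand_eq_ebKernel, mul_assoc 2, mul_comm (contourParam b) z.re]

lemma integrable_exp_neg_mul_abs {c : ℝ} (hc : 0 < c) :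
    Integrable fun t : ℝ => rexp (-(c * |t|)) := by
  rw [← integrableOn_univ, ← Set.Iic_union_Ioi (a := (0 : ℝ))]
  refine IntegrableOn.union ?_ ?_
  · exact (integrableOn_exp_mul_Iic hc 0).congr_fun
      (fun t ht => by rw [abs_of_nonpos ht, mul_neg, neg_neg]) measurableSet_Iic
  · exact (exp_neg_integrableOn_Ioi 0 hc).congr_fun
      (fun t ht => by simp only [abs_of_pos (Set.mem_Ioi.mp ht), neg_mul]) measurableSet_Ioi

lemma continuous_ebIntegrand (hb : 0 < b) (z : ℂ) :
    Continuous (ebIntegrand b (contourParam b) z) := by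
  have hε := contourParam_pos hb
  have hline : ∀ t : ℝ, (t : ℂ) + I * contourParam b ≠ 0 := fun t =>
    mul_comm I (contourParam b : ℂ) ▸ add_mul_I_ne_zero hε.ne' t
  have hsinh : ∀ p : ℝ, 0 < p → p * contourParam b < π → ∀ t : ℝ,
      Complex.sinh (p * ((t : ℂ) + I * contourParam b)) ≠ 0 := fun p hp hpε t =>
    sinh_ne_zero_of_abs_im_lt_pi (mul_ne_zero (ofReal_ne_zero.mpr hp.ne') (hline t))
      (by simpa [abs_of_pos hp, abs_of_pos hε] using hpε)
  unfold ebIntegrand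
  refine Continuous.div (by fun_prop) (by fun_prop) fun t => ?_
  refine mul_ne_zero (mul_ne_zero (hline t) (hsinh b hb (mul_contourParam_lt_pi hb) t)) ?_
  exact_mod_cast hsinh b⁻¹ (inv_pos.mpr hb) (inv_mul_contourParam_lt_pi hb) t

lemma integrable_ebIntegrand (hb : 0 < b) {z : ℂ} (hz : |z.im| < (b + b⁻¹) / 2) :
    Integrable (ebIntegrand b (contourParam b) z) := by
  obtain ⟨C, -, hC⟩ := exists_norm_ebIntegrand_le hb
  exact ((integrable_exp_neg_mul_abs (by linarith)).const_mul _).mono'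
    (continuous_ebIntegrand hb z).aestronglyMeasurable (Eventually.of_forall (hC z))

/-- The exponent `log e_b` in the definition of `eb`. -/
def logEb (b : ℝ) (z : ℂ) : ℂ := 1 / 4 * ∫ t : ℝ, ebIntegrand b (contourParam b) z t

lemma eb_eq_exp_logEb (b : ℝ) (z : ℂ) : eb b z = Complex.exp (logEb b z) := rfl

lemma exists_norm_logEb_le (hb : 0 < b) {κ : ℝ} (hκ : 0 < κ) : ∃ C > 0, ∀ z : ℂ,
    |z.im| ≤ (b + b⁻¹) / 2 - κ → ‖logEb b z‖ ≤ C * rexp (2 * contourParam b * z.re) := by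
  obtain ⟨C, hC0, hC⟩ := exists_norm_ebIntegrand_le hb
  have hint := integrable_exp_neg_mul_abs (c := 2 * κ) (by positivity)
  have hint0 : 0 < ∫ t : ℝ, rexp (-(2 * κ * |t|)) := integral_exp_pos hint
  refine ⟨C * ∫ t : ℝ, rexp (-(2 * κ * |t|)), by positivity, fun z hz => ?_⟩
  calc ‖logEb b z‖ ≤ ‖∫ t : ℝ, ebIntegrand b (contourParam b) z t‖ := by
        rw [logEb, norm_mul]
        exact mul_le_of_le_one_left (norm_nonneg _) (by norm_num)
    _ ≤ ∫ t : ℝ, C * rexp (2 * contourParam b * z.re) * rexp (-(2 * κ * |t|)) := by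
        refine norm_integral_le_of_norm_le (hint.const_mul _) (Eventually.of_forall fun t => ?_)
        refine (hC z t).trans ?_
        gcongr
        linarith
    _ = _ := by
        rw [integral_const_mul]
        ring

lemma tendsto_ebKernel_stripEnds (hb : 0 < b) {z : ℂ} (hz : |z.im| < (b + b⁻¹) / 2) {ε : ℝ} :
    Tendsto (ebKernel b z) (stripEnds ε) (𝓝 0) := by
  have hre : Tendsto (fun w : ℂ => |w.re|) (stripEnds ε) atTop :=
    tendsto_comap.mono_left inf_le_left
  have hstrip : ∀ᶠ w in stripEnds ε, |w.im| ≤ ε := mem_inf_of_right (mem_principal_self _)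
  have hlim := hre.inv_tendsto_atTop.const_mul (16 * rexp (2 * (|z.re| * ε)))
  rw [mul_zero] at hlim
  refine squeeze_zero_norm' ?_ hlim
  filter_upwards [hstrip, hre.eventually_gt_atTop 0, hre.eventually_ge_atTop b,
    hre.eventually_ge_atTop b⁻¹] with w hw hw0 hwb hwb'
  have hb' := inv_pos.mpr hb
  have hsinh := exp_div_four_le_norm_sinh hb.le (w := w)
    ((mul_inv_cancel₀ hb.ne').symm.trans_le (by gcongr))
  have hsinh' := exp_div_four_le_norm_sinh hb'.le (w := w)
    ((inv_mul_cancel₀ hb.ne').symm.trans_le (by gcongr))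
  rw [Complex.ofReal_inv] at hsinh'
  have hexp : z.re * w.im ≤ |z.re| * ε :=
    (le_abs_self _).trans ((abs_mul _ _).trans_le (by gcongr))
  calc ‖ebKernel b z w‖ ≤ (|w.re| * (1 / 4) * (1 / 4))⁻¹ * rexp (2 * (z.re * w.im)) *
        rexp (-((b + b⁻¹ - 2 * |z.im|) * |w.re|)) :=
      norm_ebKernel_le hw0 (by norm_num) (by norm_num) (Complex.abs_re_le_norm w) hsinh hsinh'
    _ ≤ (|w.re| * (1 / 4) * (1 / 4))⁻¹ * rexp (2 * (|z.re| * ε)) * 1 := by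
      gcongr
      exact Real.exp_le_one_iff.mpr (neg_nonpos.mpr (mul_nonneg (by linarith) hw0.le))
    _ = _ := by
      simp only [Pi.inv_apply]
      field_simp
      norm_num

/-- The factor `g` of `ebKernel b z w = g w / w ^ 3` that is holomorphic near the real line. -/
def ebKernelNumerator (b : ℝ) (z w : ℂ) : ℂ :=
  Complex.exp (-2 * I * z * w) / (sinhc (b * w) * sinhc ((b : ℂ)⁻¹ * w))

lemma ebKernel_eq_div_pow (hb : b ≠ 0) (z w : ℂ) :
    ebKernel b z w = ebKernelNumerator b z w / w ^ 3 := by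
  have hb' : (b : ℂ) ≠ 0 := by exact_mod_cast hb
  rw [ebKernel, ebKernelNumerator, ← mul_sinhc, ← mul_sinhc, div_div]
  congr 1
  field_simp

lemma differentiableOn_ebKernelNumerator (hb : 0 < b) (z : ℂ) :
    DifferentiableOn ℂ (ebKernelNumerator b z) (closedStrip (contourParam b)) := by
  have hne : ∀ p : ℝ, 0 < p → p * contourParam b < π → ∀ w ∈ closedStrip (contourParam b),
      sinhc (p * w) ≠ 0 := fun p hp hpε w hw => by
    refine sinhc_ne_zero (lt_of_le_of_lt ?_ hpε)
    rw [im_ofReal_mul, abs_mul, abs_of_pos hp]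
    exact mul_le_mul_of_nonneg_left hw hp.le
  have hsinhc : ∀ p : ℂ, Differentiable ℂ fun w => sinhc (p * w) := fun p =>
    differentiable_sinhc.comp (differentiable_id.const_mul p)
  refine DifferentiableOn.div (by fun_prop)
    ((hsinhc _).mul (hsinhc _)).differentiableOn fun w hw => ?_
  refine mul_ne_zero (hne b hb (mul_contourParam_lt_pi hb) w hw) ?_
  exact_mod_cast hne b⁻¹ (inv_pos.mpr hb) (inv_mul_contourParam_lt_pi hb) w hw

lemma exp_const_mul_sub_isLittleO (c : ℂ) :
    (fun w => Complex.exp (c * w) - (1 + c * w + (c * w) ^ 2 / 2)) =o[𝓝[≠] 0] (· ^ 2) := by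
  have hmul : Tendsto (fun w => c * w) (𝓝[≠] 0) (𝓝 0) :=
    ((continuous_const_mul c).tendsto' 0 0 (mul_zero c)).mono_left nhdsWithin_le_nhds
  have hexp := ((Complex.exp_sub_sum_range_succ_isLittleO_pow 2).comp_tendsto hmul).trans_isBigO
    (by simpa only [Function.comp_def, mul_pow] using
      (Asymptotics.isBigO_refl _ _).const_mul_left (c ^ 2))
  refine hexp.congr_left fun w => ?_
  norm_num [Finset.sum_range_succ, Nat.factorial]

/-- The Taylor coefficients of `ebKernelNumerator b z` at `0` up to order two. -/
def ebKernelCoeff (b : ℝ) (z : ℂ) : ℕ → ℂ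
  | 0 => 1
  | 1 => -2 * I * z
  | 2 => -2 * z ^ 2 - ((b : ℂ) ^ 2 + ((b : ℂ)⁻¹) ^ 2) / 6
  | _ => 0

lemma sinhc_mul_sinhc_sub_isLittleO {p q : ℂ} (hp : p ≠ 0) (hq : q ≠ 0) :
    (fun w => sinhc (p * w) * sinhc (q * w) - (1 + (p ^ 2 + q ^ 2) / 6 * w ^ 2)) =o[𝓝[≠] 0]
      (· ^ 2) := by
  have hcont : ContinuousAt (fun w => sinhc (q * w)) 0 :=
    (differentiable_sinhc.continuous.comp (continuous_const_mul q)).continuousAt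
  have hfirst := (sinhc_const_mul_sub_isLittleO hp).mul_isBigO 
    (isBigO_one_of_continuousAt hcont)
  have hsecond := (isBigO_one_of_continuousAt (g := fun w => 1 + (p * w) ^ 2 / 6)
    (by fun_prop)).mul_isLittleO
    (sinhc_const_mul_sub_isLittleO hq)
  have hquartic : (fun w : ℂ => p ^ 2 * q ^ 2 / 36 * w ^ 4) =o[𝓝[≠] 0] (· ^ 2) :=
    ((Asymptotics.isLittleO_pow_pow (by norm_num)).const_mul_left _).mono nhdsWithin_le_nhds
  simp only [mul_one, one_mul] at hfirst hsecond
  refine ((hfirst.add hsecond).add hquartic).congr_left fun w => ?_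
  ring

lemma isLittleO_div_sub {e S P : ℂ → ℂ} {n : ℕ} (hS : ContinuousAt S 0) (hS0 : S 0 ≠ 0)
    (h : (fun w => e w - P w * S w) =o[𝓝[≠] 0] (· ^ n)) :
    (fun w => e w / S w - P w) =o[𝓝[≠] 0] (· ^ n) := by
  have hquot := h.mul_isBigO (isBigO_one_of_continuousAt (hS.inv₀ hS0))
  simp only [mul_one] at hquot
  refine hquot.congr' ?_ (Eventually.of_forall fun _ => rfl)
  filter_upwards [(hS.eventually_ne hS0).filter_mono nhdsWithin_le_nhds] with w hw
  rw [Pi.inv_apply, sub_mul, mul_inv_cancel_right₀ hw, div_eq_mul_inv]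

lemma ebKernelNumerator_sub_isLittleO (hb : b ≠ 0) (z : ℂ) :
    (fun w => ebKernelNumerator b z w -
      ∑ k ∈ Finset.range 3, ebKernelCoeff b z k * w ^ k) =o[𝓝[≠] 0] (· ^ 2) := by
  have hb' : (b : ℂ) ≠ 0 := by exact_mod_cast hb
  set σ : ℂ := ((b : ℂ) ^ 2 + (b : ℂ)⁻¹ ^ 2) / 6 with hσ
  have hcont := differentiable_sinhc.continuous
  have hprod := (isBigO_one_of_continuousAt
    (g := fun w => ∑ k ∈ Finset.range 3, ebKernelCoeff b z k * w ^ k) (by fun_prop)).mul_isLittleO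
      (sinhc_mul_sinhc_sub_isLittleO hb' (inv_ne_zero hb'))
  have hcubic : (fun w : ℂ => w ^ 3) =o[𝓝[≠] 0] (· ^ 2) :=
    (Asymptotics.isLittleO_pow_pow (by norm_num)).mono nhdsWithin_le_nhds
  have htail := (isBigO_one_of_continuousAt
    (g := fun w => -2 * I * z * σ + (-2 * z ^ 2 - σ) * σ * w) (by fun_prop)).mul_isLittleO hcubic
  simp only [one_mul] at hprod htail
  refine isLittleO_div_sub (by fun_prop) (by simp [sinhc_zero])
    ((((exp_const_mul_sub_isLittleO (-2 * I * z)).sub hprod).sub htail).congr_left fun w => ?_)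
  simp only [ebKernelCoeff, Finset.sum_range_succ, Finset.sum_range_zero, ← hσ]
  linear_combination -2 * z ^ 2 * w ^ 2 * I_sq

theorem logEb_add_logEb_neg (hb : 0 < b) {z : ℂ} (hz : |z.im| < (b + b⁻¹) / 2) :
    logEb b z + logEb b (-z) =
      π * I * z ^ 2 + π * I * ((b : ℂ) ^ 2 + ((b : ℂ)⁻¹) ^ 2) / 12 := by
  have hgap : ∀ T : ℝ, lineGap (ebKernel b z) (contourParam b) T =
      (∫ t in -T..T, ebIntegrand b (contourParam b) z t) +
        ∫ t in -T..T, ebIntegrand b (contourParam b) (-z) (-t) := fun T => by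
    have hneg : ∀ t : ℝ, ebKernel b z (t + ((-contourParam b : ℝ) : ℂ) * I) =
        -ebIntegrand b (contourParam b) (-z) (-t) := fun t => by
      rw [ebIntegrand_eq_ebKernel, ← neg_neg (ebKernel b z _), ← ebKernel_neg_neg]
      congr 2
      push_cast
      ring
    simp only [lineGap, segmentIntegral, hneg, ← ebIntegrand_eq_ebKernel,
      intervalIntegral.integral_neg, sub_neg_eq_add]
  have hz' : |(-z).im| < (b + b⁻¹) / 2 := by rwa [neg_im, abs_neg]
  have hlim := (intervalIntegral_tendsto_integral (integrable_ebIntegrand hb hz)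
      tendsto_neg_atTop_atBot tendsto_id).add
    (intervalIntegral_tendsto_integral (integrable_ebIntegrand hb hz').comp_neg
      tendsto_neg_atTop_atBot tendsto_id)
  rw [integral_neg_eq_self] at hlim
  have hker : ebKernel b z = fun w => ebKernelNumerator b z w / w ^ (2 + 1) :=
    funext (ebKernel_eq_div_pow hb.ne' z)
  have hres := tendsto_lineGap_div_pow (contourParam_pos hb)
    (differentiableOn_ebKernelNumerator hb z) (ebKernelNumerator_sub_isLittleO hb.ne' z)
    (hker ▸ tendsto_ebKernel_stripEnds hb hz)
  rw [← hker] at hres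
  have hval := tendsto_nhds_unique hlim (hres.congr hgap)
  rw [logEb, logEb, ← mul_add, hval, ebKernelCoeff]
  ring

/-- The constant `e^{πi(b²+b⁻²)/12}` in the inversion formula for `e_b`. -/
def inversionConst (b : ℝ) : ℂ := Complex.exp (π * I * ((b : ℂ) ^ 2 + ((b : ℂ)⁻¹) ^ 2) / 12)

theorem eb_mul_eb_neg (hb : 0 < b) {z : ℂ} (hz : |z.im| < (b + b⁻¹) / 2) :
    eb b z * eb b (-z) = inversionConst b * Complex.exp (π * I * z ^ 2) := by
  rw [eb_eq_exp_logEb, eb_eq_exp_logEb, ← Complex.exp_add, logEb_add_logEb_neg hb hz,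
    inversionConst, ← Complex.exp_add, add_comm]

end Inversion

/-! ### The meromorphic continuation -/

/-- `f` is the meromorphic continuation of `e_b`: it extends `eb b` from the strip
`|Im z| < (b + b⁻¹)/2`, is holomorphic off the poles, and satisfies both shift equations. -/
structure IsEbContinuation (b : ℝ) (f : ℂ → ℂ) : Prop where
  pos : 0 < b
  eq_eb : ∀ z : ℂ, |z.im| < (b + b⁻¹) / 2 → f z = eb b z
  analyticAt : ∀ z : ℂ, z ∉ ebPoles b → AnalyticAt ℂ f z
  shift : ∀ z : ℂ, z - I * (b : ℂ) / 2 ∉ ebPoles b → z + I * (b : ℂ) / 2 ∉ ebPoles b →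
    f (z - I * (b : ℂ) / 2) = (1 + cexp (2 * (π : ℂ) * (b : ℂ) * z)) * f (z + I * (b : ℂ) / 2)
  shift_inv : ∀ z : ℂ, z - I * (b : ℂ)⁻¹ / 2 ∉ ebPoles b → z + I * (b : ℂ)⁻¹ / 2 ∉ ebPoles b →
    f (z - I * (b : ℂ)⁻¹ / 2) =
      (1 + cexp (2 * (π : ℂ) * (b : ℂ)⁻¹ * z)) * f (z + I * (b : ℂ)⁻¹ / 2)

/-- The continuation `f` of `e_b` translated so that its poles lie on the half-line `i[0, ∞)` and
the strip `|Im z| < (b + b⁻¹)/2` becomes `-(b + b⁻¹) < Im y < 0`. -/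
def shiftedEb (b : ℝ) (f : ℂ → ℂ) (y : ℂ) : ℂ := f (y + cb b)

/-- The constant relating the kernel `e^{2πi c_b y} / e_b(-y - c_b)` of the statement to
`e^{-πi y²} e_b(y + c_b)`. -/
def kernelConst (b : ℝ) : ℂ := cexp (-(π * I * cb b ^ 2)) / inversionConst b

lemma cb_eq_ofReal_mul_I (b : ℝ) : cb b = (((b + b⁻¹) / 2 : ℝ) : ℂ) * I := by
  unfold cb; push_cast; ring

lemma cb_re (b : ℝ) : (cb b).re = 0 := by rw [cb_eq_ofReal_mul_I]; simp

lemma cb_im (b : ℝ) : (cb b).im = (b + b⁻¹) / 2 := by rw [cb_eq_ofReal_mul_I]; simp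

lemma inversionConst_ne_zero (b : ℝ) : inversionConst b ≠ 0 := Complex.exp_ne_zero _

lemma norm_inversionConst (b : ℝ) : ‖inversionConst b‖ = 1 := by
  have harg : (π * I * ((b : ℂ) ^ 2 + ((b : ℂ)⁻¹) ^ 2) / 12) =
      ((π * (b ^ 2 + b⁻¹ ^ 2) / 12 : ℝ) : ℂ) * I := by push_cast; ring
  rw [inversionConst, harg, Complex.norm_exp_ofReal_mul_I]

lemma notMem_ebPoles {b : ℝ} (hb : 0 < b) {z : ℂ} (hz : z.re ≠ 0 ∨ z.im < (b + b⁻¹) / 2) :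
    z ∉ ebPoles b := by
  rintro ⟨m, n, rfl⟩
  have hmn : 0 ≤ m * b + n * b⁻¹ := by positivity
  have hpole : cb b + I * ((m : ℂ) * (b : ℂ) + (n : ℂ) * (b : ℂ)⁻¹) =
      (((b + b⁻¹) / 2 + (m * b + n * b⁻¹) : ℝ) : ℂ) * I := by
    rw [cb_eq_ofReal_mul_I]; push_cast; ring
  rw [hpole, Complex.re_ofReal_mul, Complex.im_ofReal_mul, I_re, I_im, mul_zero, mul_one] at hz
  rcases hz with hre | him
  · exact hre rfl
  · linarith

lemma norm_exp_pi_mul_I_mul_sq (z : ℂ) :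
    ‖cexp (π * I * z ^ 2)‖ = rexp (-2 * π * (z.re * z.im)) := by
  rw [Complex.norm_exp]
  congr 1
  simp [sq]
  ring

lemma norm_exp_neg_pi_mul_I_mul_sq (z : ℂ) :
    ‖cexp (-(π * I * z ^ 2))‖ = rexp (2 * π * (z.re * z.im)) := by
  rw [Complex.exp_neg, norm_inv, norm_exp_pi_mul_I_mul_sq, ← Real.exp_neg]
  congr 1
  ring

lemma le_norm_one_sub_exp_of_re_le {w : ℂ} {r : ℝ} (hw : w.re ≤ -r) :
    1 - rexp (-r) ≤ ‖1 - cexp w‖ := by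
  have htri := norm_sub_norm_le 1 (cexp w)
  rw [norm_one, Complex.norm_exp] at htri
  exact (sub_le_sub_left (Real.exp_le_exp.2 hw) 1).trans htri

lemma le_norm_one_sub_exp_of_le_re {w : ℂ} {r : ℝ} (hw : r ≤ w.re) :
    rexp w.re * (1 - rexp (-r)) ≤ ‖1 - cexp w‖ := by
  have hneg := le_norm_one_sub_exp_of_re_le (w := -w) (by simpa using hw)
  have hfac : 1 - cexp w = -(cexp w * (1 - cexp (-w))) := by
    rw [mul_sub, ← Complex.exp_add, add_neg_cancel, Complex.exp_zero]; ring
  rw [hfac, norm_neg, norm_mul, Complex.norm_exp]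
  gcongr

lemma re_two_pi_mul_ofReal_mul (p : ℝ) (y : ℂ) : (2 * π * p * y : ℂ).re = 2 * π * p * y.re := by
  rw [show (2 * π * p * y : ℂ) = ((2 * π * p : ℝ) : ℂ) * y by push_cast; ring,
    Complex.re_ofReal_mul]

lemma tendsto_exp_mul_sub_atTop {c : ℝ} (hc : 0 < c) (r : ℝ) :
    Tendsto (fun X : ℝ => rexp (c * (r - X))) atTop (𝓝 0) :=
  Real.tendsto_exp_atBot.comp <|
    (tendsto_atBot_add_const_left _ r tendsto_neg_atTop_atBot).const_mul_atBot hc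

namespace IsEbContinuation

variable {b : ℝ} {f : ℂ → ℂ}

lemma add_inv_pos (h : IsEbContinuation b f) : 0 < b + b⁻¹ := add_pos h.pos (inv_pos.2 h.pos)

lemma period_pos (h : IsEbContinuation b f) {p : ℝ} (hp : p = b ∨ p = b⁻¹) : 0 < p := by
  rcases hp with rfl | rfl
  exacts [h.pos, inv_pos.2 h.pos]

lemma ne_zero (h : IsEbContinuation b f) {z : ℂ} (hz : |z.im| < (b + b⁻¹) / 2) : f z ≠ 0 := by
  rw [h.eq_eb z hz, eb_eq_exp_logEb]; exact Complex.exp_ne_zero _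

lemma mul_apply_neg_of_abs_im_lt (h : IsEbContinuation b f) {z : ℂ} (hz : |z.im| < (b + b⁻¹) / 2) :
    f z * f (-z) = inversionConst b * cexp (π * I * z ^ 2) := by
  rw [h.eq_eb z hz, h.eq_eb (-z) (by simpa using hz), eb_mul_eb_neg h.pos hz]

lemma mul_apply_neg_of_re_pos (h : IsEbContinuation b f) {z : ℂ} (hz : 0 < z.re) :
    f z * f (-z) = inversionConst b * cexp (π * I * z ^ 2) := by
  have hlhs : AnalyticOnNhd ℂ (fun z => f z * f (-z)) {z : ℂ | 0 < z.re} := fun w hw =>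
    (h.analyticAt w (notMem_ebPoles h.pos (Or.inl hw.ne'))).mul
      (AnalyticAt.fun_comp (g := f) (f := fun w => -w)
        (h.analyticAt (-w) (notMem_ebPoles h.pos (Or.inl (by simpa using hw.ne'))))
        analyticAt_id.neg)
  have hrhs : AnalyticOnNhd ℂ (fun z => inversionConst b * cexp (π * I * z ^ 2))
      {z : ℂ | 0 < z.re} := fun w _ => by fun_prop
  refine hlhs.eqOn_of_preconnected_of_eventuallyEq hrhs
    (convex_halfSpace_re_gt 0).isPreconnected (z₀ := 1) (by simp) ?_ hz
  have hstrip : IsOpen {w : ℂ | |w.im| < (b + b⁻¹) / 2} :=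
    isOpen_lt (by fun_prop) continuous_const
  filter_upwards [hstrip.mem_nhds (x := 1) (by simpa using h.add_inv_pos)] with w hw
  exact h.mul_apply_neg_of_abs_im_lt hw

theorem mul_apply_neg (h : IsEbContinuation b f) {z : ℂ} (hz : |z.im| < (b + b⁻¹) / 2 ∨ z.re ≠ 0) :
    f z * f (-z) = inversionConst b * cexp (π * I * z ^ 2) := by
  rcases hz with hstrip | hre
  · exact h.mul_apply_neg_of_abs_im_lt hstrip
  · rcases lt_or_gt_of_ne hre with hneg | hpos
    · simpa [mul_comm] using h.mul_apply_neg_of_re_pos (z := -z) (by simpa using hneg)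
    · exact h.mul_apply_neg_of_re_pos hpos

lemma differentiableAt_shiftedEb (h : IsEbContinuation b f) {y : ℂ} (hy : y.re ≠ 0 ∨ y.im < 0) :
    DifferentiableAt ℂ (shiftedEb b f) y := by
  have hf : DifferentiableAt ℂ f (y + cb b) := (h.analyticAt _ (notMem_ebPoles h.pos (by
    simpa [cb_re, cb_im] using hy))).differentiableAt
  exact hf.comp (f := fun y => y + cb b) y (by fun_prop)

theorem shiftedEb_sub_period (h : IsEbContinuation b f) {p : ℝ} (hp : p = b ∨ p = b⁻¹) {y : ℂ}
    (hy : y.re ≠ 0 ∨ y.im < 0) :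
    shiftedEb b f (y - I * p) = (1 - cexp (2 * π * p * y)) * shiftedEb b f y := by
  have hb0 : (b : ℂ) ≠ 0 := ofReal_ne_zero.2 h.pos.ne'
  have hp0 := h.period_pos hp
  have hpole : y + cb b ∉ ebPoles b := notMem_ebPoles h.pos (by simpa [cb_re, cb_im] using hy)
  have hpole' : y - I * p + cb b ∉ ebPoles b := notMem_ebPoles h.pos (by
    simp only [add_re, sub_re, mul_re, I_re, I_im, ofReal_re, ofReal_im, cb_re, add_im, sub_im,
      mul_im, cb_im]
    exact hy.imp (fun hre => by simpa using hre) (fun him => by linarith))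
  have hmid : f (y - I * p + cb b) =
      (1 + cexp (2 * π * p * (y + cb b - I * p / 2))) * f (y + cb b) := by
    have hlow : y + cb b - I * p / 2 - I * p / 2 = y - I * p + cb b := by ring
    have hhigh : y + cb b - I * p / 2 + I * p / 2 = y + cb b := by ring
    have hshift : ∀ z : ℂ, z - I * p / 2 ∉ ebPoles b → z + I * p / 2 ∉ ebPoles b →
        f (z - I * p / 2) = (1 + cexp (2 * π * p * z)) * f (z + I * p / 2) := by
      rcases hp with rfl | rfl
      · exact h.shift
      · simpa only [ofReal_inv] using h.shift_inv
    have := hshift (y + cb b - I * p / 2) (by rwa [hlow]) (by rwa [hhigh])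
    rwa [hlow, hhigh] at this
  have harg : 2 * π * p * (y + cb b - I * p / 2) = 2 * π * p * y + π * I := by
    unfold cb
    rcases hp with rfl | rfl <;> push_cast <;> field_simp <;> ring
  rw [harg, Complex.exp_add, Complex.exp_pi_mul_I] at hmid
  unfold shiftedEb
  rw [hmid]
  ring

theorem exp_div_eq_kernelConst_mul (h : IsEbContinuation b f) {y : ℂ}
    (hy : y.re ≠ 0 ∨ (y.im < 0 ∧ -(b + b⁻¹) < y.im)) :
    cexp (2 * π * I * cb b * y) / f (-y - cb b) =
      kernelConst b * (cexp (-(π * I * y ^ 2)) * shiftedEb b f y) := by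
  have hinv := h.mul_apply_neg (z := y + cb b) (by
    simp only [add_re, add_im, cb_re, cb_im, add_zero, abs_lt]
    exact hy.symm.imp_left fun him => ⟨by linarith [him.2], by linarith [him.1]⟩)
  rw [show -(y + cb b) = -y - cb b by ring] at hinv
  have hK := inversionConst_ne_zero b
  have hne : f (-y - cb b) ≠ 0 :=
    right_ne_zero_of_mul (hinv ▸ mul_ne_zero hK (Complex.exp_ne_zero _))
  have hexp : cexp (2 * π * I * cb b * y) = cexp (-(π * I * cb b ^ 2)) *
      cexp (-(π * I * y ^ 2)) * cexp (π * I * (y + cb b) ^ 2) := by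
    rw [← Complex.exp_add, ← Complex.exp_add]; congr 1; ring
  rw [div_eq_iff hne, hexp, kernelConst, shiftedEb]
  field_simp
  linear_combination (-1 : ℂ) * hinv

end IsEbContinuation

/-! ### Growth of the shifted dilogarithm -/

namespace IsEbContinuation

variable {b : ℝ} {f : ℂ → ℂ}

lemma shiftedEb_eq_exp_logEb (h : IsEbContinuation b f) {y : ℂ} (hlow : -(b + b⁻¹) < y.im)
    (hup : y.im < 0) : shiftedEb b f y = cexp (logEb b (y + cb b)) := by
  rw [shiftedEb, h.eq_eb, eb_eq_exp_logEb]
  rw [add_im, cb_im, abs_lt]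
  constructor <;> linarith

lemma exists_norm_shiftedEb_le_strip (h : IsEbContinuation b f) {κ : ℝ} (hκ : 0 < κ) :
    ∃ M > 0, ∀ y : ℂ, -(b + b⁻¹) + κ ≤ y.im → y.im ≤ -κ → y.re ≤ 0 → ‖shiftedEb b f y‖ ≤ M := by
  obtain ⟨C, hC, hlog⟩ := exists_norm_logEb_le h.pos hκ
  refine ⟨rexp C, Real.exp_pos _, fun y hlow hup hre => ?_⟩
  rw [h.shiftedEb_eq_exp_logEb (by linarith) (by linarith), Complex.norm_exp, Real.exp_le_exp]
  calc (logEb b (y + cb b)).re ≤ ‖logEb b (y + cb b)‖ := Complex.re_le_norm _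
    _ ≤ C * rexp (2 * contourParam b * (y + cb b).re) :=
      hlog _ (by rw [add_im, cb_im, abs_le]; constructor <;> linarith)
    _ ≤ C * 1 := by
      gcongr
      rw [Real.exp_le_one_iff, add_re, cb_re, add_zero]
      exact mul_nonpos_of_nonneg_of_nonpos (by linarith [contourParam_pos h.pos]) hre
    _ = C := mul_one C

/-- On the right the inversion formula trades `y` for the bounded value at `-y`, at the price of a
Gaussian. -/
lemma exists_norm_shiftedEb_le_exp_strip (h : IsEbContinuation b f) {κ : ℝ} (hκ : 0 < κ) (A : ℝ) :
    ∃ M > 0, ∀ y : ℂ, -(b + b⁻¹) + κ ≤ y.im → y.im ≤ -κ → -A ≤ y.re →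
      ‖shiftedEb b f y‖ ≤ M * rexp (-2 * π * (y.re * (y.im + (b + b⁻¹) / 2))) := by
  obtain ⟨C, hC, hlog⟩ := exists_norm_logEb_le h.pos hκ
  have hε := contourParam_pos h.pos
  refine ⟨rexp (C * rexp (2 * contourParam b * A)), Real.exp_pos _,
    fun y hlow hup hre => ?_⟩
  set w := y + cb b with hw
  have hwim : |w.im| ≤ (b + b⁻¹) / 2 - κ := by
    rw [hw, add_im, cb_im, abs_le]; constructor <;> linarith
  have hlogw : (-logEb b (-w)).re ≤ C * rexp (2 * contourParam b * A) :=
    calc (-logEb b (-w)).re ≤ ‖-logEb b (-w)‖ := Complex.re_le_norm _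
      _ = ‖logEb b (-w)‖ := norm_neg _
      _ ≤ C * rexp (2 * contourParam b * (-w).re) := hlog _ (by simpa using hwim)
      _ ≤ _ := by
        gcongr
        rw [hw, neg_re, add_re, cb_re]; linarith
  have hinv := h.mul_apply_neg_of_abs_im_lt (z := w) (by linarith)
  have hneg : f (-w) = cexp (logEb b (-w)) := by
    rw [h.eq_eb _ (by rw [neg_im, abs_neg]; linarith), eb_eq_exp_logEb]
  have hφ : shiftedEb b f y =
      inversionConst b * cexp (π * I * w ^ 2) * cexp (-logEb b (-w)) := by
    rw [← hinv, hneg, mul_assoc, ← Complex.exp_add, add_neg_cancel, Complex.exp_zero, mul_one]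
    rfl
  rw [hφ, norm_mul, norm_mul, norm_inversionConst, one_mul, norm_exp_pi_mul_I_mul_sq, mul_comm,
    Complex.norm_exp, hw, add_re, add_im, cb_re, cb_im, add_zero, ← hw]
  gcongr

lemma exists_norm_shiftedEb_le_add_period (h : IsEbContinuation b f) {p a κ T : ℝ}
    (hp : p = b ∨ p = b⁻¹) (ha : 0 < a) (hT : -(b + b⁻¹) + κ ≤ T - p)
    (hbd : ∃ M > 0, ∀ y : ℂ, -(b + b⁻¹) + κ ≤ y.im → y.im ≤ T → y.re ≤ -a →
      ‖shiftedEb b f y‖ ≤ M) :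
    ∃ M > 0, ∀ y : ℂ, -(b + b⁻¹) + κ ≤ y.im → y.im ≤ T + p → y.re ≤ -a →
      ‖shiftedEb b f y‖ ≤ M := by
  obtain ⟨M, hM, hbd⟩ := hbd
  have hp0 := h.period_pos hp
  have hpa : 0 < 2 * π * p * a := by positivity
  set D := 1 - rexp (-(2 * π * p * a)) with hD
  have hD0 : 0 < D := by rw [hD, sub_pos, Real.exp_lt_one_iff]; linarith
  refine ⟨max M (M / D), lt_max_of_lt_left hM, fun y hlow hup hre => ?_⟩
  rcases le_or_gt y.im T with hyT | hyT
  · exact (hbd y hlow hyT hre).trans (le_max_left _ _)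
  · refine le_trans ?_ (le_max_right _ _)
    have hshift := hbd (y - I * p) (by simp; linarith) (by simp; linarith) (by simpa using hre)
    rw [h.shiftedEb_sub_period hp (Or.inl (by linarith)), norm_mul] at hshift
    have hDle : D ≤ ‖1 - cexp (2 * π * p * y)‖ := le_norm_one_sub_exp_of_re_le (by
      rw [re_two_pi_mul_ofReal_mul, ← mul_neg]; gcongr)
    rw [le_div_iff₀' hD0]
    exact (mul_le_mul_of_nonneg_right hDle (norm_nonneg _)).trans hshift

theorem exists_norm_shiftedEb_le (h : IsEbContinuation b f) {a κ : ℝ} (ha : 0 < a) (hκ : 0 < κ) :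
    ∃ M > 0, ∀ y : ℂ, -(b + b⁻¹) + κ ≤ y.im → y.im ≤ b + b⁻¹ - κ → y.re ≤ -a →
      ‖shiftedEb b f y‖ ≤ M := by
  have hb := h.pos
  have hb' := inv_pos.2 hb
  obtain ⟨κ', hκ'0, hκ'⟩ := exists_between (lt_min hκ (lt_min (half_pos hb) (half_pos hb')))
  obtain ⟨hκκ', hκb, hκb'⟩ := by simpa only [lt_min_iff] using hκ'
  obtain ⟨M₀, hM₀, hstrip⟩ := h.exists_norm_shiftedEb_le_strip hκ'0
  obtain ⟨M, hM, hbd⟩ := h.exists_norm_shiftedEb_le_add_period (T := -κ' + b) (κ := κ') (Or.inr rfl)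
    ha (by linarith) (h.exists_norm_shiftedEb_le_add_period (Or.inl rfl) ha (by linarith)
      ⟨M₀, hM₀, fun y hlow hup hre => hstrip y hlow hup (by linarith)⟩)
  exact ⟨M, hM, fun y hlow hup => hbd y (by linarith) (by linarith)⟩

theorem exists_norm_shiftedEb_le_exp (h : IsEbContinuation b f) {a κ : ℝ} (ha : 0 < a)
    (hκ : 0 < κ) : ∃ M, ∀ y : ℂ, -(b + b⁻¹) + κ ≤ y.im → y.im ≤ 0 → a ≤ y.re →
      ‖shiftedEb b f y‖ ≤ M * rexp (-2 * π * (y.re * (y.im + (b + b⁻¹) / 2))) := by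
  have hb := h.pos
  obtain ⟨κ', hκ'0, hκ'⟩ := exists_between (lt_min hκ (lt_min hb (half_pos (inv_pos.2 hb))))
  obtain ⟨hκκ', hκb, hκb'⟩ := by simpa only [lt_min_iff] using hκ'
  obtain ⟨M, -, hstrip⟩ := h.exists_norm_shiftedEb_le_exp_strip hκ'0 0
  have hba : 0 < 2 * π * b * a := by positivity
  set D := 1 - rexp (-(2 * π * b * a)) with hD
  have hD0 : 0 < D := by rw [hD, sub_pos, Real.exp_lt_one_iff]; linarith
  refine ⟨max M (M / D), fun y hlow hup hre => ?_⟩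
  rcases le_or_gt y.im (-κ') with hyκ | hyκ
  · refine (hstrip y (by linarith) hyκ (by linarith)).trans ?_
    gcongr
    exact le_max_left _ _
  · suffices hle : ‖shiftedEb b f y‖ ≤
        M / D * rexp (-2 * π * (y.re * (y.im + (b + b⁻¹) / 2))) by
      refine hle.trans ?_
      gcongr
      exact le_max_right _ _
    have hshift := hstrip (y - I * b) (by simp; linarith) (by simp; linarith) (by simp; linarith)
    rw [h.shiftedEb_sub_period (Or.inl rfl) (Or.inl (by linarith)), norm_mul] at hshift
    have hDle := le_norm_one_sub_exp_of_le_re (w := 2 * π * b * y) (r := 2 * π * b * a) (by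
      rw [re_two_pi_mul_ofReal_mul]; gcongr)
    rw [re_two_pi_mul_ofReal_mul] at hDle
    have hexp : rexp (-2 * π * ((y - I * b).re * ((y - I * b).im + (b + b⁻¹) / 2))) =
        rexp (2 * π * b * y.re) * rexp (-2 * π * (y.re * (y.im + (b + b⁻¹) / 2))) := by
      rw [← Real.exp_add]; congr 1; simp; ring
    rw [hexp] at hshift
    rw [div_mul_eq_mul_div, le_div_iff₀ hD0]
    refine le_of_mul_le_mul_left ?_ (Real.exp_pos (2 * π * b * y.re))
    calc rexp (2 * π * b * y.re) * (‖shiftedEb b f y‖ * D)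
        = rexp (2 * π * b * y.re) * D * ‖shiftedEb b f y‖ := by ring
      _ ≤ ‖1 - cexp (2 * π * b * y)‖ * ‖shiftedEb b f y‖ := by gcongr
      _ ≤ _ := hshift.trans_eq (by ring)

lemma tendsto_shiftedEb_strip (h : IsEbContinuation b f) {u : ℂ} (hlow : -(b + b⁻¹) < u.im)
    (hup : u.im < 0) : Tendsto (fun X : ℝ => shiftedEb b f (u - X)) atTop (𝓝 1) := by
  obtain ⟨κ, hκ, hκ'⟩ := exists_between (lt_min (neg_lt_iff_pos_add.1 hlow) (neg_pos.2 hup))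
  obtain ⟨hκlow, hκup⟩ := lt_min_iff.1 hκ'
  obtain ⟨C, -, hlog⟩ := exists_norm_logEb_le h.pos hκ
  have hlim : Tendsto (fun X : ℝ => C * rexp (2 * contourParam b * (u.re - X))) atTop
      (𝓝 0) := by
    simpa using (tendsto_exp_mul_sub_atTop
      (mul_pos two_pos (contourParam_pos h.pos)) u.re).const_mul C
  have hlog0 : Tendsto (fun X : ℝ => logEb b (u - X + cb b)) atTop (𝓝 0) := by
    refine squeeze_zero_norm (fun X => ?_) hlim
    have := hlog (u - X + cb b) (by
      simp only [add_im, cb_im, sub_im, ofReal_im, sub_zero, abs_le]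
      constructor <;> linarith)
    simpa [cb_re] using this
  have hexp := (Complex.continuous_exp.tendsto 0).comp hlog0
  rw [Complex.exp_zero] at hexp
  exact hexp.congr fun X =>
    (h.shiftedEb_eq_exp_logEb (by simpa using hlow) (by simpa using hup)).symm

lemma tendsto_shiftedEb_of_sub_period (h : IsEbContinuation b f) {p : ℝ} (hp : p = b ∨ p = b⁻¹)
    {u : ℂ} (hu : Tendsto (fun X : ℝ => shiftedEb b f (u - I * p - X)) atTop (𝓝 1)) :
    Tendsto (fun X : ℝ => shiftedEb b f (u - X)) atTop (𝓝 1) := by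
  have hp0 := h.period_pos hp
  have hexp : Tendsto (fun X : ℝ => cexp (2 * π * p * (u - X))) atTop (𝓝 0) := by
    rw [tendsto_zero_iff_norm_tendsto_zero]
    simpa only [Complex.norm_exp, re_two_pi_mul_ofReal_mul, sub_re, ofReal_re] using
      tendsto_exp_mul_sub_atTop (by positivity) u.re
  have hden : Tendsto (fun X : ℝ => 1 - cexp (2 * π * p * (u - X))) atTop (𝓝 1) := by
    simpa using hexp.const_sub 1
  have hquot := hu.div hden one_ne_zero
  rw [div_one] at hquot
  refine hquot.congr' ?_
  filter_upwards [eventually_gt_atTop u.re, hden.eventually_ne one_ne_zero] with X hX hne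
  rw [Pi.div_apply, show u - I * p - X = u - X - I * p by ring,
    h.shiftedEb_sub_period hp (Or.inl (by simp; linarith)), mul_div_cancel_left₀ _ hne]

theorem tendsto_shiftedEb (h : IsEbContinuation b f) {u : ℂ} (hlow : -(b + b⁻¹) < u.im)
    (hup : u.im < b + b⁻¹) : Tendsto (fun X : ℝ => shiftedEb b f (u - X)) atTop (𝓝 1) := by
  have hb := h.pos
  have hb' := inv_pos.2 hb
  rcases lt_or_ge u.im 0 with hneg | hnonneg
  · exact h.tendsto_shiftedEb_strip hlow hneg
  refine h.tendsto_shiftedEb_of_sub_period (Or.inl rfl) ?_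
  rcases lt_or_ge u.im b with hlt | hge
  · exact h.tendsto_shiftedEb_strip (by simp; linarith) (by simpa using hlt)
  · exact h.tendsto_shiftedEb_of_sub_period (Or.inr rfl)
      (h.tendsto_shiftedEb_strip (by simp; linarith) (by simp; linarith))

end IsEbContinuation

/-! ### Staircase contours -/

/-- The integral of `k` along the horizontal ray from `-∞ + iη` to `c + iη`. -/
def leftRayIntegral (k : ℂ → ℂ) (c η : ℝ) : ℂ := ∫ t in Set.Iic c, k (t + η * I)

/-- The integral of `k` along the horizontal ray from `c + iη` to `+∞ + iη`. -/
def rightRayIntegral (k : ℂ → ℂ) (c η : ℝ) : ℂ := ∫ t in Set.Ioi c, k (t + η * I)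

/-- The contour integral of `k` along the vertical segment from `c + iη₁` to `c + iη₂`. -/
def verticalIntegral (k : ℂ → ℂ) (c η₁ η₂ : ℝ) : ℂ := I * ∫ s in η₁..η₂, k (c + s * I)

/-- The contour integral of `k` along the staircase that comes from `-∞` at height `η₁`, changes
height on the line `Re y = c`, and goes to `+∞` at height `η₂`. -/
def staircaseIntegral (k : ℂ → ℂ) (c η₁ η₂ : ℝ) : ℂ :=
  leftRayIntegral k c η₁ + verticalIntegral k c η₁ η₂ + rightRayIntegral k c η₂

/-- The set of points of the staircase along which `staircaseIntegral` integrates. -/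
def staircase (c η₁ η₂ : ℝ) : Set ℂ :=
  Set.Iic c ×ℂ {η₁} ∪ {c} ×ℂ Set.uIcc η₁ η₂ ∪ Set.Ici c ×ℂ {η₂}

/-- Absolute integrability of `k` along each of the three pieces of a staircase. -/
structure StaircaseIntegrable (k : ℂ → ℂ) (c η₁ η₂ : ℝ) : Prop where
  left : IntegrableOn (fun t : ℝ => k (t + η₁ * I)) (Set.Iic c)
  vertical : IntervalIntegrable (fun s : ℝ => k (c + s * I)) volume η₁ η₂
  right : IntegrableOn (fun t : ℝ => k (t + η₂ * I)) (Set.Ioi c)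

/-- `k` is holomorphic and decays exponentially on the half-strip to the left of `Re y = c`
between the heights `η` and `η'`. -/
structure HasLeftDecay (k : ℂ → ℂ) (c η η' : ℝ) : Prop where
  differentiableAt : ∀ y ∈ Set.Iic c ×ℂ Set.uIcc η η', DifferentiableAt ℂ k y
  exists_norm_le : ∃ M, ∃ l > 0, ∀ y ∈ Set.Iic c ×ℂ Set.uIcc η η', ‖k y‖ ≤ M * rexp (l * y.re)

/-- `k` is holomorphic and decays exponentially on the half-strip to the right of `Re y = c`
between the heights `η` and `η'`. -/
structure HasRightDecay (k : ℂ → ℂ) (c η η' : ℝ) : Prop where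
  differentiableAt : ∀ y ∈ Set.Ici c ×ℂ Set.uIcc η η', DifferentiableAt ℂ k y
  exists_norm_le :
    ∃ M, ∃ l > 0, ∀ y ∈ Set.Ici c ×ℂ Set.uIcc η η', ‖k y‖ ≤ M * rexp (-(l * y.re))

section Staircase

variable {k : ℂ → ℂ} {c η η' : ℝ}

lemma add_mul_I_mem_reProdIm {s t : Set ℝ} {u v : ℝ} (hu : u ∈ s) (hv : v ∈ t) :
    (u + v * I : ℂ) ∈ s ×ℂ t := by
  simpa [mem_reProdIm] using ⟨hu, hv⟩

lemma continuousAt_horizontal {t : ℝ} (h : ContinuousAt k (t + η * I)) :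
    ContinuousAt (fun t : ℝ => k (t + η * I)) t :=
  ContinuousAt.comp (f := fun t : ℝ => (t + η * I : ℂ)) h (by fun_prop)

lemma continuousAt_vertical {s : ℝ} (h : ContinuousAt k (c + s * I)) :
    ContinuousAt (fun s : ℝ => k (c + s * I)) s :=
  ContinuousAt.comp (f := fun s : ℝ => (c + s * I : ℂ)) h (by fun_prop)

lemma HasLeftDecay.integrableOn (h : HasLeftDecay k c η η') {s : ℝ} (hs : s ∈ Set.uIcc η η') :
    IntegrableOn (fun t : ℝ => k (t + s * I)) (Set.Iic c) := by
  obtain ⟨M, l, hl, hM⟩ := h.exists_norm_le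
  refine ((integrableOn_exp_mul_Iic hl c).const_mul M).mono' ?_ ?_
  · exact ContinuousOn.aestronglyMeasurable (fun t ht => (continuousAt_horizontal
      (h.differentiableAt _ (add_mul_I_mem_reProdIm ht hs)).continuousAt).continuousWithinAt)
      measurableSet_Iic
  · filter_upwards [ae_restrict_mem measurableSet_Iic] with t ht
    simpa using hM _ (add_mul_I_mem_reProdIm ht hs)

lemma HasRightDecay.integrableOn (h : HasRightDecay k c η η') {s : ℝ} (hs : s ∈ Set.uIcc η η') :
    IntegrableOn (fun t : ℝ => k (t + s * I)) (Set.Ioi c) := by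
  obtain ⟨M, l, hl, hM⟩ := h.exists_norm_le
  have hexp : IntegrableOn (fun t => M * rexp (-(l * t))) (Set.Ioi c) := by
    simpa only [neg_mul, IntegrableOn] using (exp_neg_integrableOn_Ioi c hl).const_mul M
  refine hexp.mono' ?_ ?_
  · exact ContinuousOn.aestronglyMeasurable (fun t ht => (continuousAt_horizontal
      (h.differentiableAt _ (add_mul_I_mem_reProdIm (Set.Ioi_subset_Ici_self ht)
        hs)).continuousAt).continuousWithinAt) measurableSet_Ioi
  · filter_upwards [ae_restrict_mem measurableSet_Ioi] with t ht
    simpa using hM _ (add_mul_I_mem_reProdIm (Set.Ioi_subset_Ici_self ht) hs)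

lemma verticalIntegral_symm (k : ℂ → ℂ) (c η η' : ℝ) :
    verticalIntegral k c η η' = -verticalIntegral k c η' η := by
  rw [verticalIntegral, intervalIntegral.integral_symm, mul_neg, verticalIntegral]

lemma verticalIntegral_add_adjacent (hk : ∀ s : ℝ, ContinuousAt k (c + s * I)) (η₁ η₂ η₃ : ℝ) :
    verticalIntegral k c η₁ η₂ + verticalIntegral k c η₂ η₃ = verticalIntegral k c η₁ η₃ := by
  have hcont : Continuous fun s : ℝ => k (c + s * I) :=
    continuous_iff_continuousAt.mpr fun s => continuousAt_vertical (hk s)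
  simp only [verticalIntegral]
  rw [← mul_add, intervalIntegral.integral_add_adjacent_intervals (hcont.intervalIntegrable _ _)
    (hcont.intervalIntegrable _ _)]

lemma integral_add_verticalIntegral_eq {a d : ℝ} (had : a ≤ d)
    (hk : ∀ y ∈ Set.Icc a d ×ℂ Set.uIcc η η', DifferentiableAt ℂ k y) :
    (∫ t in a..d, k (t + η * I)) + verticalIntegral k d η η' =
      verticalIntegral k a η η' + ∫ t in a..d, k (t + η' * I) := by
  have hrect := Complex.integral_boundary_rect_eq_zero_of_differentiableOn k ⟨a, η⟩ ⟨d, η'⟩ <| by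
    rw [Set.uIcc_of_le had]
    exact fun y hy => (hk y hy).differentiableWithinAt
  simp only [smul_eq_mul] at hrect
  simp only [verticalIntegral]
  linear_combination hrect

lemma tendsto_integral_left_of_shift
    (hk : ∀ y ∈ Set.Iic c ×ℂ Set.uIcc η η', DifferentiableAt ℂ k y)
    (hint : IntegrableOn (fun t : ℝ => k (t + η' * I)) (Set.Iic c))
    (hside : Tendsto (fun a => verticalIntegral k a η η') atBot (𝓝 0)) :
    Tendsto (fun a : ℝ => ∫ t in a..c, k (t + η * I)) atBot
      (𝓝 (leftRayIntegral k c η' - verticalIntegral k c η η')) := by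
  have hray := intervalIntegral_tendsto_integral_Iic c hint tendsto_id
  have hlim := (hside.add hray).sub_const (verticalIntegral k c η η')
  rw [zero_add] at hlim
  refine hlim.congr' ?_
  filter_upwards [eventually_le_atBot c] with a ha
  rw [id, ← integral_add_verticalIntegral_eq ha fun y hy => hk y ⟨hy.1.2, hy.2⟩,
    add_sub_cancel_right]

lemma tendsto_integral_right_of_shift
    (hk : ∀ y ∈ Set.Ici c ×ℂ Set.uIcc η η', DifferentiableAt ℂ k y)
    (hint : IntegrableOn (fun t : ℝ => k (t + η' * I)) (Set.Ioi c))
    (hside : Tendsto (fun d => verticalIntegral k d η η') atTop (𝓝 0)) :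
    Tendsto (fun d : ℝ => ∫ t in c..d, k (t + η * I)) atTop
      (𝓝 (verticalIntegral k c η η' + rightRayIntegral k c η')) := by
  have hray := intervalIntegral_tendsto_integral_Ioi c hint tendsto_id
  have hlim := (hray.const_add (verticalIntegral k c η η')).sub hside
  rw [sub_zero] at hlim
  refine hlim.congr' ?_
  filter_upwards [eventually_ge_atTop c] with d hd
  rw [id, ← integral_add_verticalIntegral_eq hd fun y hy => hk y ⟨hy.1.1, hy.2⟩,
    add_sub_cancel_right]

lemma tendsto_verticalIntegral_of_norm_le {F : Filter ℝ} {B : ℝ → ℝ} (hB : Tendsto B F (𝓝 0))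
    (hk : ∀ᶠ a : ℝ in F, ∀ s ∈ Set.uIcc η η', ‖k (a + s * I)‖ ≤ B a) :
    Tendsto (fun a => verticalIntegral k a η η') F (𝓝 0) := by
  refine squeeze_zero_norm' ?_ (by simpa using hB.mul_const |η' - η|)
  filter_upwards [hk] with a ha
  rw [verticalIntegral, norm_mul, norm_I, one_mul]
  exact intervalIntegral.norm_integral_le_of_norm_le_const fun s hs =>
    ha s (Set.uIoc_subset_uIcc hs)

lemma tendsto_verticalIntegral_of_tendsto {F : Filter ℝ} [F.IsCountablyGenerated] {M : ℝ}
    (hk : ∀ᶠ a : ℝ in F, ∀ s ∈ Set.uIoc η η', ContinuousAt k (a + s * I))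
    (hM : ∀ᶠ a : ℝ in F, ∀ s ∈ Set.uIoc η η', ‖k (a + s * I)‖ ≤ M)
    (hlim : ∀ s ∈ Set.uIoc η η', Tendsto (fun a : ℝ => k (a + s * I)) F (𝓝 0)) :
    Tendsto (fun a => verticalIntegral k a η η') F (𝓝 0) := by
  have hlim := intervalIntegral.tendsto_integral_filter_of_dominated_convergence (μ := volume)
    (fun _ => M) (hk.mono fun a ha => ContinuousOn.aestronglyMeasurable
      (fun s hs => (continuousAt_vertical (ha s hs)).continuousWithinAt) measurableSet_uIoc)
    (hM.mono fun a ha => .of_forall ha) intervalIntegrable_const (.of_forall hlim)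
  simpa only [verticalIntegral, intervalIntegral.integral_zero, mul_zero] using hlim.const_mul I

lemma HasLeftDecay.tendsto_verticalIntegral (h : HasLeftDecay k c η η') :
    Tendsto (fun a => verticalIntegral k a η η') atBot (𝓝 0) := by
  obtain ⟨M, l, hl, hM⟩ := h.exists_norm_le
  refine tendsto_verticalIntegral_of_norm_le (B := fun a => M * rexp (l * a)) ?_ ?_
  · simpa using (tendsto_exp_atBot.comp (tendsto_id.const_mul_atBot hl)).const_mul M
  · filter_upwards [eventually_le_atBot c] with a ha s hs
    simpa using hM _ (add_mul_I_mem_reProdIm ha hs)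

lemma HasRightDecay.tendsto_verticalIntegral (h : HasRightDecay k c η η') :
    Tendsto (fun d => verticalIntegral k d η η') atTop (𝓝 0) := by
  obtain ⟨M, l, hl, hM⟩ := h.exists_norm_le
  refine tendsto_verticalIntegral_of_norm_le (B := fun d => M * rexp (-(l * d))) ?_ ?_
  · simpa using
      (tendsto_exp_neg_atTop_nhds_zero.comp (tendsto_id.const_mul_atTop hl)).const_mul M
  · filter_upwards [eventually_ge_atTop c] with d hd s hs
    simpa using hM _ (add_mul_I_mem_reProdIm hd hs)

lemma HasLeftDecay.leftRayIntegral_eq (h : HasLeftDecay k c η η') :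
    leftRayIntegral k c η = leftRayIntegral k c η' - verticalIntegral k c η η' :=
  tendsto_nhds_unique
    (intervalIntegral_tendsto_integral_Iic c (h.integrableOn Set.left_mem_uIcc) tendsto_id)
    (tendsto_integral_left_of_shift h.differentiableAt (h.integrableOn Set.right_mem_uIcc)
      h.tendsto_verticalIntegral)

lemma HasRightDecay.rightRayIntegral_eq (h : HasRightDecay k c η η') :
    rightRayIntegral k c η = verticalIntegral k c η η' + rightRayIntegral k c η' :=
  tendsto_nhds_unique
    (intervalIntegral_tendsto_integral_Ioi c (h.integrableOn Set.left_mem_uIcc) tendsto_id)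
    (tendsto_integral_right_of_shift h.differentiableAt (h.integrableOn Set.right_mem_uIcc)
      h.tendsto_verticalIntegral)

lemma staircaseIntegral_eq_of_decay {η₁ η₂ η₁' η₂' : ℝ}
    (hk : ∀ s : ℝ, ContinuousAt k (c + s * I)) (hl : HasLeftDecay k c η₁ η₁')
    (hr : HasRightDecay k c η₂ η₂') :
    staircaseIntegral k c η₁ η₂ = staircaseIntegral k c η₁' η₂' := by
  simp only [staircaseIntegral]
  rw [hl.leftRayIntegral_eq, hr.rightRayIntegral_eq]
  linear_combination verticalIntegral_add_adjacent hk η₁' η₁ η₂ +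
    verticalIntegral_add_adjacent hk η₁' η₂ η₂' - verticalIntegral_symm k c η₁' η₁

variable {η₁ η₂ : ℝ}

lemma horizontal_left_mem_staircase {t : ℝ} (ht : t ≤ c) :
    (t + η₁ * I : ℂ) ∈ staircase c η₁ η₂ :=
  .inl (.inl (add_mul_I_mem_reProdIm ht rfl))

lemma vertical_mem_staircase {s : ℝ} (hs : s ∈ Set.uIcc η₁ η₂) :
    (c + s * I : ℂ) ∈ staircase c η₁ η₂ :=
  .inl (.inr (add_mul_I_mem_reProdIm rfl hs))

lemma horizontal_right_mem_staircase {t : ℝ} (ht : c ≤ t) :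
    (t + η₂ * I : ℂ) ∈ staircase c η₁ η₂ :=
  .inr (add_mul_I_mem_reProdIm ht rfl)

lemma im_mem_uIcc_of_mem_staircase {y : ℂ} (hy : y ∈ staircase c η₁ η₂) :
    y.im ∈ Set.uIcc η₁ η₂ := by
  obtain (⟨_, him⟩ | ⟨_, him⟩) | ⟨_, him⟩ := hy
  · exact him ▸ Set.left_mem_uIcc
  · exact him
  · exact him ▸ Set.right_mem_uIcc

lemma re_le_or_im_eq_of_mem_staircase {y : ℂ} (hy : y ∈ staircase c η₁ η₂) :
    y.re ≤ c ∨ y.im = η₂ := by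
  obtain (⟨hre, _⟩ | ⟨hre, _⟩) | ⟨_, him⟩ := hy
  exacts [.inl hre, .inl hre.le, .inr him]

lemma StaircaseIntegrable.of_decay {η₁' η₂' : ℝ} (hk : ∀ s : ℝ, ContinuousAt k (c + s * I))
    (hl : HasLeftDecay k c η₁ η₁') (hr : HasRightDecay k c η₂ η₂') :
    StaircaseIntegrable k c η₁ η₂ where
  left := hl.integrableOn Set.left_mem_uIcc
  vertical := (continuous_iff_continuousAt.mpr fun s =>
    continuousAt_vertical (hk s)).intervalIntegrable _ _
  right := hr.integrableOn Set.left_mem_uIcc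

lemma staircaseIntegral_eq_of_corner_le {c' : ℝ} (hcc : c' ≤ c)
    (hl : IntegrableOn (fun t : ℝ => k (t + η₁ * I)) (Set.Iic c))
    (hr : IntegrableOn (fun t : ℝ => k (t + η₂ * I)) (Set.Ioi c'))
    (hk : ∀ y ∈ Set.Icc c' c ×ℂ Set.uIcc η₁ η₂, DifferentiableAt ℂ k y) :
    staircaseIntegral k c η₁ η₂ = staircaseIntegral k c' η₁ η₂ := by
  have hleft : leftRayIntegral k c η₁ - leftRayIntegral k c' η₁ = ∫ t in c'..c, k (t + η₁ * I) :=
    intervalIntegral.integral_Iic_sub_Iic (hl.mono_set (Set.Iic_subset_Iic.mpr hcc)) hl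
  have hright : rightRayIntegral k c' η₂ - rightRayIntegral k c η₂ =
      ∫ t in c'..c, k (t + η₂ * I) :=
    intervalIntegral.integral_Ioi_sub_Ioi hr hcc
  simp only [staircaseIntegral]
  linear_combination hleft - hright + integral_add_verticalIntegral_eq hcc hk

lemma staircaseIntegral_congr {k' : ℂ → ℂ} (h : Set.EqOn k k' (staircase c η₁ η₂)) :
    staircaseIntegral k c η₁ η₂ = staircaseIntegral k' c η₁ η₂ := by
  have hleft : leftRayIntegral k c η₁ = leftRayIntegral k' c η₁ :=
    setIntegral_congr_fun measurableSet_Iic fun t ht => h (horizontal_left_mem_staircase ht)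
  have hvert : verticalIntegral k c η₁ η₂ = verticalIntegral k' c η₁ η₂ :=
    congrArg (I * ·) (intervalIntegral.integral_congr fun s hs => h (vertical_mem_staircase hs))
  have hright : rightRayIntegral k c η₂ = rightRayIntegral k' c η₂ :=
    setIntegral_congr_fun measurableSet_Ioi fun t ht =>
      h (horizontal_right_mem_staircase (Set.Ioi_subset_Ici_self ht))
  rw [staircaseIntegral, hleft, hvert, hright, staircaseIntegral]

lemma tendsto_staircaseIntegral_mul {ι : Type*} {F : Filter ι} [F.IsCountablyGenerated]
    {g ψ₀ : ℂ → ℂ} {ψ : ι → ℂ → ℂ} {M : ℝ} (hg : StaircaseIntegrable g c η₁ η₂)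
    (hψ : ∀ᶠ i in F, ContinuousOn (ψ i) (staircase c η₁ η₂))
    (hM : ∀ᶠ i in F, ∀ y ∈ staircase c η₁ η₂, ‖ψ i y‖ ≤ M)
    (hlim : ∀ y ∈ staircase c η₁ η₂, Tendsto (fun i => ψ i y) F (𝓝 (ψ₀ y))) :
    Tendsto (fun i => staircaseIntegral (fun y => ψ i y * g y) c η₁ η₂) F
      (𝓝 (staircaseIntegral (fun y => ψ₀ y * g y) c η₁ η₂)) := by
  have hpiece {s : Set ℝ} (hs : MeasurableSet s) {γ : ℝ → ℂ} (hγ : Continuous γ)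
      (hmem : Set.MapsTo γ s (staircase c η₁ η₂)) (hint : IntegrableOn (fun t => g (γ t)) s) :
      Tendsto (fun i => ∫ t in s, ψ i (γ t) * g (γ t)) F
        (𝓝 (∫ t in s, ψ₀ (γ t) * g (γ t))) := by
    refine tendsto_integral_filter_of_dominated_convergence (fun t => M * ‖g (γ t)‖) ?_ ?_
      (hint.norm.const_mul M) ?_
    · exact hψ.mono fun i hi => ((hi.comp hγ.continuousOn hmem).aestronglyMeasurable hs).mul
        hint.aestronglyMeasurable
    · refine hM.mono fun i hi => (ae_restrict_mem hs).mono fun t ht => ?_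
      rw [norm_mul]
      gcongr
      exact hi _ (hmem ht)
    · exact (ae_restrict_mem hs).mono fun t ht => (hlim _ (hmem ht)).mul_const _
  refine .add (.add ?_ (.const_mul I (.sub ?_ ?_))) ?_
  · exact hpiece measurableSet_Iic (by fun_prop) (fun t ht => horizontal_left_mem_staircase ht)
      hg.left
  · exact hpiece measurableSet_Ioc (by fun_prop) (fun s hs => vertical_mem_staircase
      (Set.Icc_subset_uIcc (Set.Ioc_subset_Icc_self hs))) hg.vertical.1
  · exact hpiece measurableSet_Ioc (by fun_prop) (fun s hs => vertical_mem_staircase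
      (Set.Icc_subset_uIcc' (Set.Ioc_subset_Icc_self hs))) hg.vertical.2
  · exact hpiece measurableSet_Ioi (by fun_prop) (fun t ht => horizontal_right_mem_staircase
      (Set.Ioi_subset_Ici_self ht)) hg.right

lemma staircaseIntegral_const_mul (a : ℂ) (k : ℂ → ℂ) (c η₁ η₂ : ℝ) :
    staircaseIntegral (fun y => a * k y) c η₁ η₂ = a * staircaseIntegral k c η₁ η₂ := by
  simp only [staircaseIntegral, leftRayIntegral, verticalIntegral, rightRayIntegral,
    integral_const_mul, intervalIntegral.integral_const_mul]
  ring

lemma staircaseIntegral_sub {k' : ℂ → ℂ} (h : StaircaseIntegrable k c η₁ η₂)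
    (h' : StaircaseIntegrable k' c η₁ η₂) :
    staircaseIntegral (fun y => k y - k' y) c η₁ η₂ =
      staircaseIntegral k c η₁ η₂ - staircaseIntegral k' c η₁ η₂ := by
  simp only [staircaseIntegral, leftRayIntegral, verticalIntegral, rightRayIntegral,
    integral_sub h.left h'.left, intervalIntegral.integral_sub h.vertical h'.vertical,
    integral_sub h.right h'.right]
  ring

lemma staircaseIntegral_sub_mul_I (k : ℂ → ℂ) (c η₁ η₂ p : ℝ) :
    staircaseIntegral (fun y => k (y - I * p)) c η₁ η₂ =
      staircaseIntegral k c (η₁ - p) (η₂ - p) := by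
  have hpoint (t s : ℝ) : (t + s * I - I * p : ℂ) = t + (s - p : ℝ) * I := by push_cast; ring
  simp only [staircaseIntegral, leftRayIntegral, verticalIntegral, rightRayIntegral, hpoint]
  rw [intervalIntegral.integral_comp_sub_right (fun s : ℝ => k (c + s * I)) p]

lemma staircaseIntegral_sub_real (k : ℂ → ℂ) (c η₁ η₂ X : ℝ) :
    staircaseIntegral (fun u => k (u - X)) c η₁ η₂ = staircaseIntegral k (c - X) η₁ η₂ := by
  have hpoint (t s : ℝ) : (t + s * I - X : ℂ) = (t - X : ℝ) + s * I := by push_cast; ring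
  have hmp := measurePreserving_sub_right (volume : Measure ℝ) X
  have hemb : MeasurableEmbedding fun t : ℝ => t - X :=
    (MeasurableEquiv.subRight X).measurableEmbedding
  have hleft := hmp.setIntegral_preimage_emb hemb (fun t : ℝ => k (t + η₁ * I)) (Set.Iic (c - X))
  have hright := hmp.setIntegral_preimage_emb hemb (fun t : ℝ => k (t + η₂ * I)) (Set.Ioi (c - X))
  rw [Set.preimage_sub_const_Iic, sub_add_cancel] at hleft
  rw [Set.preimage_sub_const_Ioi, sub_add_cancel] at hright
  simp only [staircaseIntegral, leftRayIntegral, verticalIntegral, rightRayIntegral, hpoint, hleft,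
    hright]

end Staircase

/-! ### The Fourier transform along a staircase -/

/-- The four corners `ρ(±1 ± i)` of the square of side `2ρ` centred at the origin. -/
def squareCorner (ρ : ℝ) (s : ℤˣ × ℤˣ) : ℂ := ρ * ((s.1 : ℤ) + (s.2 : ℤ) * I)

lemma exp_mul_norm_le_sum_squareCorner {ρ : ℝ} (hρ : 0 ≤ ρ) (a : ℂ) :
    rexp (ρ * ‖a‖) ≤ ∑ s, ‖cexp (a * squareCorner ρ s)‖ := by
  have hre (s : ℤˣ × ℤˣ) : (a * squareCorner ρ s).re =
      (s.1 : ℤ) * (ρ * a.re) + -((s.2 : ℤ) * (ρ * a.im)) := by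
    simp [squareCorner]; ring
  calc rexp (ρ * ‖a‖) ≤ rexp (|ρ * a.re| + |ρ * a.im|) := by
        rw [exp_le_exp, abs_mul, abs_mul, abs_of_nonneg hρ, ← mul_add]
        exact mul_le_mul_of_nonneg_left (Complex.norm_le_abs_re_add_abs_im a) hρ
    _ ≤ (rexp (ρ * a.re) + rexp (-(ρ * a.re))) * (rexp (ρ * a.im) + rexp (-(ρ * a.im))) := by
        rw [Real.exp_add]
        exact mul_le_mul (exp_abs_le _) (exp_abs_le _) (by positivity) (by positivity)
    _ = ∑ s, ‖cexp (a * squareCorner ρ s)‖ := by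
        simp [Complex.norm_exp, hre, Real.exp_add, Fintype.sum_prod_type, UnitsInt.univ]
        ring

lemma norm_mul_exp_mul_le_sum_squareCorner (a : ℂ) {x x₀ : ℂ} {ρ : ℝ} (hρ : 0 < ρ)
    (hx : ‖x - x₀‖ ≤ ρ / 2) :
    ‖a * cexp (a * x)‖ ≤ 2 / ρ * ∑ s, ‖cexp (a * (x₀ + squareCorner ρ s))‖ := by
  have hexp : ‖cexp (a * (x - x₀))‖ ≤ rexp (ρ / 2 * ‖a‖) := by
    refine (Complex.norm_exp_le_exp_norm _).trans (exp_le_exp.mpr ?_)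
    rw [norm_mul, mul_comm]
    gcongr
  have hnorm : ‖a‖ ≤ 2 / ρ * rexp (ρ / 2 * ‖a‖) := by
    rw [div_mul_eq_mul_div, le_div_iff₀ hρ]
    linarith [add_one_le_exp (ρ / 2 * ‖a‖)]
  calc ‖a * cexp (a * x)‖ = ‖a‖ * ‖cexp (a * (x - x₀))‖ * ‖cexp (a * x₀)‖ := by
        rw [norm_mul, mul_assoc, ← norm_mul (cexp _), ← Complex.exp_add]
        ring_nf
    _ ≤ 2 / ρ * rexp (ρ / 2 * ‖a‖) * rexp (ρ / 2 * ‖a‖) * ‖cexp (a * x₀)‖ := by gcongr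
    _ = 2 / ρ * (rexp (ρ * ‖a‖) * ‖cexp (a * x₀)‖) := by
        rw [mul_assoc (2 / ρ), ← Real.exp_add, mul_assoc]
        ring_nf
    _ ≤ 2 / ρ * ((∑ s, ‖cexp (a * squareCorner ρ s)‖) * ‖cexp (a * x₀)‖) := by
        gcongr
        exact exp_mul_norm_le_sum_squareCorner hρ.le a
    _ = 2 / ρ * ∑ s, ‖cexp (a * (x₀ + squareCorner ρ s))‖ := by
        simp only [Finset.sum_mul, ← norm_mul, ← Complex.exp_add, mul_add, add_comm]

lemma differentiableAt_integral_exp_mul {α : Type*} [MeasurableSpace α] {μ : Measure α}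
    {a g : α → ℂ} (ha : AEStronglyMeasurable a μ) {x₀ : ℂ}
    (hint : ∀ᶠ x in 𝓝 x₀, Integrable (fun t => cexp (a t * x) * g t) μ) :
    DifferentiableAt ℂ (fun x => ∫ t, cexp (a t * x) * g t ∂μ) x₀ := by
  obtain ⟨r, hr, hball⟩ := Metric.eventually_nhds_iff_ball.mp hint
  obtain ⟨ρ, hρ, hρr⟩ : ∃ ρ > 0, 2 * ρ < r := ⟨r / 3, by linarith, by linarith⟩
  have hcorner (s : ℤˣ × ℤˣ) : x₀ + squareCorner ρ s ∈ Metric.ball x₀ r := by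
    have hs (u : ℤˣ) : ‖((u : ℤ) : ℂ)‖ = 1 := by
      rcases Int.units_eq_one_or u with rfl | rfl <;> simp
    calc dist (x₀ + squareCorner ρ s) x₀ = ρ * ‖((s.1 : ℤ) + (s.2 : ℤ) * I : ℂ)‖ := by
          rw [dist_eq_norm, add_sub_cancel_left, squareCorner, norm_mul, norm_real,
            norm_of_nonneg hρ.le]
      _ ≤ ρ * 2 := by
          gcongr
          exact (norm_add_le _ _).trans_eq (by rw [norm_mul, hs, hs, norm_I]; norm_num)
      _ < r := by linarith
  have hx₀ := hball x₀ (Metric.mem_ball_self hr)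
  refine (hasDerivAt_integral_of_dominated_loc_of_deriv_le
    (bound := fun t => 2 / ρ * ∑ s, ‖cexp (a t * (x₀ + squareCorner ρ s)) * g t‖)
    (F' := fun x t => a t * (cexp (a t * x) * g t)) (Metric.ball_mem_nhds x₀ (half_pos hρ))
    (hint.mono fun x hx => hx.aestronglyMeasurable) hx₀ (ha.mul hx₀.aestronglyMeasurable)
    (.of_forall fun t x hx => ?_)
    ((integrable_finsetSum _ fun s _ => (hball _ (hcorner s)).norm).const_mul _)
    (.of_forall fun t x _ => ?_)).2.differentiableAt
  · simp only [norm_mul, ← Finset.sum_mul, ← mul_assoc]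
    rw [← norm_mul]
    gcongr
    exact norm_mul_exp_mul_le_sum_squareCorner _ hρ (mem_ball_iff_norm.mp hx).le
  · have hderiv := ((hasDerivAt_id x).const_mul (a t)).cexp.mul_const (g t)
    exact hderiv.congr_deriv (by simp only [id, mul_one]; ring)

/-- The integrand `e^{-2πixy - πiy²} e_b(y + c_b)`, which agrees up to the factor `kernelConst b`
with `e^{-2πixy} e^{2πic_b y} / e_b(-y - c_b)`. -/
def fourierKernel (b : ℝ) (f : ℂ → ℂ) (x y : ℂ) : ℂ :=
  cexp (-(2 * π * I * y) * x) * (cexp (-(π * I * y ^ 2)) * shiftedEb b f y)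

/-- The integral of `fourierKernel b f x` along the staircase that runs at height `(b + b⁻¹) / 2`
up to `Re y = -1` and at height `η` afterwards. -/
def staircaseTransform (b : ℝ) (f : ℂ → ℂ) (η : ℝ) (x : ℂ) : ℂ :=
  staircaseIntegral (fourierKernel b f x) (-1) ((b + b⁻¹) / 2) η

lemma norm_fourierKernel (b : ℝ) (f : ℂ → ℂ) (x y : ℂ) : ‖fourierKernel b f x y‖ =
    rexp (2 * π * (x.re * y.im + (x.im + y.im) * y.re)) * ‖shiftedEb b f y‖ := by
  have hre : (-(2 * π * I * y) * x).re = 2 * π * (x.re * y.im + x.im * y.re) := by simp; ring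
  rw [fourierKernel, norm_mul, norm_mul,
    norm_exp_neg_pi_mul_I_mul_sq, Complex.norm_exp, hre, ← mul_assoc, ← Real.exp_add]
  congr 2
  ring

lemma exp_two_pi_mul_re_mul_le (x : ℂ) {v V : ℝ} (hv : |v| ≤ V) :
    rexp (2 * π * (x.re * v)) ≤ rexp (2 * π * (|x.re| * V)) := by
  refine exp_le_exp.mpr (mul_le_mul_of_nonneg_left ?_ two_pi_pos.le)
  exact (le_abs_self _).trans (by rw [abs_mul]; gcongr)

lemma norm_fourierKernel_le_of_norm_shiftedEb_le {b : ℝ} {f : ℂ → ℂ} (x : ℂ) {y : ℂ} {M : ℝ}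
    (him : |y.im| ≤ b + b⁻¹) (hy : ‖shiftedEb b f y‖ ≤ M) : ‖fourierKernel b f x y‖ ≤
      rexp (2 * π * (|x.re| * (b + b⁻¹))) * rexp (2 * π * ((x.im + y.im) * y.re)) * M := by
  rw [norm_fourierKernel, mul_add, Real.exp_add]
  exact mul_le_mul (mul_le_mul_of_nonneg_right (exp_two_pi_mul_re_mul_le x him) (by positivity)) hy
    (norm_nonneg _) (by positivity)

lemma norm_fourierKernel_le {b : ℝ} {f : ℂ → ℂ} (x : ℂ) {y : ℂ} {M : ℝ}
    (him : |y.im| ≤ b + b⁻¹)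
    (hy : ‖shiftedEb b f y‖ ≤ M * rexp (-2 * π * (y.re * (y.im + (b + b⁻¹) / 2)))) :
    ‖fourierKernel b f x y‖ ≤ rexp (2 * π * (|x.re| * (b + b⁻¹))) * M *
      rexp (-(2 * π * ((b + b⁻¹) / 2 - x.im) * y.re)) := by
  refine (norm_fourierKernel_le_of_norm_shiftedEb_le x him hy).trans_eq ?_
  rw [mul_mul_mul_comm, mul_assoc, ← Real.exp_add]
  ring_nf

namespace IsEbContinuation

variable {b : ℝ} {f : ℂ → ℂ}

lemma differentiableAt_fourierKernel (h : IsEbContinuation b f) (x : ℂ) {y : ℂ}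
    (hy : y.re ≠ 0 ∨ y.im < 0) : DifferentiableAt ℂ (fourierKernel b f x) y :=
  .mul (by fun_prop) (.mul (by fun_prop) (h.differentiableAt_shiftedEb hy))

lemma continuousAt_fourierKernel_vertical (h : IsEbContinuation b f) (x : ℂ) {c : ℝ} (hc : c ≠ 0)
    (s : ℝ) : ContinuousAt (fourierKernel b f x) (c + s * I) :=
  (h.differentiableAt_fourierKernel x (.inl (by simpa using hc))).continuousAt

lemma hasLeftDecay_fourierKernel (h : IsEbContinuation b f) {x : ℂ} {c η η' : ℝ} (hc : c < 0)
    (hη : |η| < b + b⁻¹) (hη' : |η'| < b + b⁻¹) (hx : -x.im < η) (hx' : -x.im < η') :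
    HasLeftDecay (fourierKernel b f x) c η η' where
  differentiableAt y hy := h.differentiableAt_fourierKernel x (.inl (hy.1.trans_lt hc).ne)
  exists_norm_le := by
    rw [abs_lt] at hη hη'
    obtain ⟨κ, hκ, hκV⟩ := exists_between (lt_min (sub_pos.mpr (max_lt hη.2 hη'.2))
      (sub_pos.mpr (lt_min hη.1 hη'.1)))
    obtain ⟨hκup, hκlow⟩ := lt_min_iff.mp hκV
    obtain ⟨M, hM, hbound⟩ := h.exists_norm_shiftedEb_le (neg_pos.mpr hc) hκ
    refine ⟨rexp (2 * π * (|x.re| * (b + b⁻¹))) * M, 2 * π * (x.im + min η η'),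
      mul_pos two_pi_pos (by linarith [lt_min hx hx']), fun y ⟨hre, hlow, hup⟩ => ?_⟩
    have him : |y.im| ≤ b + b⁻¹ := abs_le.mpr ⟨by linarith, by linarith⟩
    have hle : (x.im + y.im) * y.re ≤ (x.im + min η η') * y.re :=
      mul_le_mul_of_nonpos_right (by linarith) (hre.trans hc.le)
    refine (norm_fourierKernel_le_of_norm_shiftedEb_le x him (hbound y (by linarith) (by linarith)
      (hre.trans_eq (neg_neg c).symm))).trans ?_
    rw [mul_right_comm, mul_assoc (2 * π)]
    gcongr

lemma hasRightDecay_fourierKernel (h : IsEbContinuation b f) {x : ℂ} (c : ℝ) {η η' : ℝ}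
    (hη : η ∈ Set.Ioo (-(b + b⁻¹)) 0) (hη' : η' ∈ Set.Ioo (-(b + b⁻¹)) 0)
    (hx : x.im < (b + b⁻¹) / 2) : HasRightDecay (fourierKernel b f x) c η η' where
  differentiableAt y hy :=
    h.differentiableAt_fourierKernel x (.inr (hy.2.2.trans_lt (max_lt hη.2 hη'.2)))
  exists_norm_le := by
    obtain ⟨κ, hκ, hκV⟩ := exists_between (lt_min (neg_pos.mpr (max_lt hη.2 hη'.2))
      (sub_pos.mpr (lt_min hη.1 hη'.1)))
    obtain ⟨hκup, hκlow⟩ := lt_min_iff.mp hκV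
    obtain ⟨M, -, hbound⟩ := h.exists_norm_shiftedEb_le_exp_strip hκ (-c)
    refine ⟨rexp (2 * π * (|x.re| * (b + b⁻¹))) * M, 2 * π * ((b + b⁻¹) / 2 - x.im),
      mul_pos two_pi_pos (sub_pos.mpr hx), fun y ⟨hre, hlow, hup⟩ => ?_⟩
    exact norm_fourierKernel_le x (abs_le.mpr ⟨by linarith, by linarith⟩)
      (hbound y (by linarith) (by linarith) ((neg_neg c).trans_le hre))

lemma hasRightDecay_fourierKernel_of_pos (h : IsEbContinuation b f) {x : ℂ} {c η η' : ℝ}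
    (hc : 0 < c) (hη : η ∈ Set.Ioc (-(b + b⁻¹)) 0) (hη' : η' ∈ Set.Ioc (-(b + b⁻¹)) 0)
    (hx : x.im < (b + b⁻¹) / 2) : HasRightDecay (fourierKernel b f x) c η η' where
  differentiableAt y hy := h.differentiableAt_fourierKernel x (.inl (hc.trans_le hy.1).ne')
  exists_norm_le := by
    obtain ⟨κ, hκ, hκV⟩ := exists_between (sub_pos.mpr (lt_min hη.1 hη'.1))
    obtain ⟨M, hbound⟩ := h.exists_norm_shiftedEb_le_exp hc hκ
    refine ⟨rexp (2 * π * (|x.re| * (b + b⁻¹))) * M, 2 * π * ((b + b⁻¹) / 2 - x.im),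
      mul_pos two_pi_pos (sub_pos.mpr hx), fun y ⟨hre, hlow, hup⟩ => ?_⟩
    have him : y.im ≤ 0 := hup.trans (max_le hη.2 hη'.2)
    exact norm_fourierKernel_le x (abs_le.mpr ⟨by linarith, by linarith [h.add_inv_pos]⟩)
      (hbound y (by linarith) him hre)

lemma staircaseIntegrable_fourierKernel (h : IsEbContinuation b f) {x : ℂ} {c η : ℝ} (hc : c < 0)
    (hη : η ∈ Set.Ioo (-(b + b⁻¹)) 0) (hx : |x.im| < (b + b⁻¹) / 2) :
    StaircaseIntegrable (fourierKernel b f x) c ((b + b⁻¹) / 2) η := by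
  have hQ := h.add_inv_pos
  obtain ⟨hlow, hup⟩ := abs_lt.mp hx
  have habs : |(b + b⁻¹) / 2| < b + b⁻¹ := by
    rw [abs_of_pos (half_pos hQ)]
    exact half_lt_self hQ
  have hlow' : -x.im < (b + b⁻¹) / 2 := by linarith
  exact .of_decay (h.continuousAt_fourierKernel_vertical x hc.ne)
    (h.hasLeftDecay_fourierKernel hc habs habs hlow' hlow')
    (h.hasRightDecay_fourierKernel c hη hη hup)

lemma fourierKernel_sub_mul_I (h : IsEbContinuation b f) {p : ℝ} (hp : p = b ∨ p = b⁻¹) (x : ℂ)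
    {y : ℂ} (hy : y.re ≠ 0 ∨ y.im < 0) : fourierKernel b f x (y - I * p) =
      cexp (π * I * p ^ 2 - 2 * π * p * x) *
        (fourierKernel b f (x - I * p) y - fourierKernel b f x y) := by
  have hsub : cexp (-(2 * π * I * (y - I * p)) * x) * cexp (-(π * I * (y - I * p) ^ 2)) =
      cexp (π * I * p ^ 2 - 2 * π * p * x) *
        (cexp (-(2 * π * I * y) * (x - I * p)) * cexp (-(π * I * y ^ 2))) := by
    simp only [← Complex.exp_add]
    congr 1
    ring_nf
    simp only [I_sq, I_pow_three]
    ring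
  have hfactor : cexp (-(2 * π * I * y) * (x - I * p)) * cexp (2 * π * p * y) =
      cexp (-(2 * π * I * y) * x) := by
    rw [← Complex.exp_add]
    congr 1
    ring_nf
    simp only [I_sq]
    ring
  simp only [fourierKernel]
  rw [h.shiftedEb_sub_period hp hy, ← mul_assoc, hsub, ← hfactor]
  ring

lemma staircaseTransform_sub_mul_I (h : IsEbContinuation b f) {p η : ℝ} (hp : p = b ∨ p = b⁻¹)
    (hη : η ∈ Set.Ioo (-min b b⁻¹) 0) {x : ℂ} (hx : -((b + b⁻¹) / 2) < x.im - p)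
    (hx' : x.im < (b + b⁻¹) / 2) : staircaseTransform b f η (x - I * p) =
      (1 + cexp (2 * π * p * x - π * I * p ^ 2)) * staircaseTransform b f η x := by
  have hb := h.pos
  have hb' := inv_pos.mpr hb
  have hp0 := h.period_pos hp
  obtain ⟨hηb, hηb'⟩ := max_lt_iff.mp ((max_neg_neg b b⁻¹).trans_lt hη.1)
  have hηp : η - p ∈ Set.Ioo (-(b + b⁻¹)) 0 :=
    ⟨by rcases hp with rfl | rfl <;> linarith, by linarith [hη.2]⟩
  have hηQ : η ∈ Set.Ioo (-(b + b⁻¹)) 0 := ⟨by linarith, hη.2⟩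
  have him : (x - I * p).im = x.im - p := by simp
  have hshift : staircaseTransform b f η x = cexp (π * I * p ^ 2 - 2 * π * p * x) *
      (staircaseTransform b f η (x - I * p) - staircaseTransform b f η x) := by
    simp only [staircaseTransform]
    rw [← staircaseIntegral_sub
        (h.staircaseIntegrable_fourierKernel (by norm_num) hηQ (by rw [him, abs_lt]; grind))
        (h.staircaseIntegrable_fourierKernel (by norm_num) hηQ (by rw [abs_lt]; grind)),
      ← staircaseIntegral_const_mul,
      staircaseIntegral_eq_of_decay (h.continuousAt_fourierKernel_vertical x (by norm_num))
        (h.hasLeftDecay_fourierKernel (η' := (b + b⁻¹) / 2 - p) (by norm_num)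
          (by rw [abs_lt]; grind) (by rw [abs_lt]; grind) (by linarith) (by linarith))
        (h.hasRightDecay_fourierKernel (-1) hηQ hηp hx'),
      ← staircaseIntegral_sub_mul_I]
    refine staircaseIntegral_congr fun y hy => h.fourierKernel_sub_mul_I hp x ?_
    exact (re_le_or_im_eq_of_mem_staircase hy).imp (fun hre => (by linarith : y.re < 0).ne)
      (fun him => him.trans_lt hη.2)
  have hinv : cexp (2 * π * p * x - π * I * p ^ 2) * cexp (π * I * p ^ 2 - 2 * π * p * x) = 1 := by
    rw [← Complex.exp_add, sub_add_sub_cancel, sub_self, Complex.exp_zero]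
  linear_combination -cexp (2 * π * p * x - π * I * p ^ 2) * hshift -
    (staircaseTransform b f η (x - I * p) - staircaseTransform b f η x) * hinv

lemma differentiableAt_staircaseTransform (h : IsEbContinuation b f) {η : ℝ}
    (hη : η ∈ Set.Ioo (-(b + b⁻¹)) 0) {x : ℂ} (hx : |x.im| < (b + b⁻¹) / 2) :
    DifferentiableAt ℂ (staircaseTransform b f η) x := by
  have hint : ∀ᶠ x' in 𝓝 x,
      StaircaseIntegrable (fourierKernel b f x') (-1) ((b + b⁻¹) / 2) η :=
    ((by fun_prop : ContinuousAt (fun x' : ℂ => |x'.im|) x).eventually_lt_const hx).mono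
      fun x' hx' => h.staircaseIntegrable_fourierKernel (by norm_num) hη hx'
  have hline {μ : Measure ℝ} {γ : ℝ → ℂ} (hγ : Continuous γ)
      (hμ : ∀ᶠ x' in 𝓝 x, Integrable (fun t => fourierKernel b f x' (γ t)) μ) :
      DifferentiableAt ℂ (fun x' => ∫ t, fourierKernel b f x' (γ t) ∂μ) x :=
    differentiableAt_integral_exp_mul (by fun_prop) hμ
  have hvert := ((hline (γ := fun s : ℝ => ((-1 : ℝ) + s * I : ℂ)) (by fun_prop)
    (hint.mono fun x' hx' => hx'.vertical.1)).sub (hline (by fun_prop)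
      (hint.mono fun x' hx' => hx'.vertical.2))).const_mul I
  exact ((hline (by fun_prop) (hint.mono fun x' hx' => hx'.left)).add hvert).add
    (hline (by fun_prop) (hint.mono fun x' hx' => hx'.right))

end IsEbContinuation

/-! ### Uniqueness of solutions of the two shift equations -/

section Incommensurable

variable {a c : ℝ}

lemma int_mul_ne_int_mul_of_irrational_div (hc : c ≠ 0) (hirr : Irrational (a / c)) {m : ℤ}
    (hm : m ≠ 0) (n : ℤ) : m * a ≠ n * c := by
  intro h
  refine (hirr.intCast_mul hm).ne_int n ?_
  rw [mul_div_assoc', h, mul_div_cancel_right₀ _ hc]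

lemma exists_nat_mul_sub_nat_mul_lt (ha : 0 < a) (hc : 0 < c) (hirr : Irrational (a / c)) {ε : ℝ}
    (hε : 0 < ε) : ∃ m n : ℕ, (m * a - n * c : ℝ) ≠ 0 ∧ |m * a - n * c| < ε := by
  have hpos : 0 < min ε (min a c) := lt_min hε (lt_min ha hc)
  obtain ⟨x, hx, hxε⟩ :=
    (dense_addSubgroupClosure_pair_iff.mpr hirr).exists_mem_open isOpen_Ioo
      (Set.nonempty_Ioo.mpr hpos)
  obtain ⟨m, n, rfl⟩ := AddSubgroup.mem_closure_pair.mp hx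
  simp only [zsmul_eq_mul, Set.mem_Ioo, lt_min_iff] at hxε
  obtain ⟨hx0, hxε, hxa, hxc⟩ := hxε
  have habs : |(m.natAbs : ℝ) * a - n.natAbs * c| = m * a + n * c := by
    have hmul {k : ℤ} (hk : 0 < k) {t : ℝ} (ht : 0 < t) : t ≤ k * t :=
      le_mul_of_one_le_left ht.le (mod_cast hk)
    simp only [Nat.cast_natAbs, Int.cast_abs]
    rcases lt_or_ge 0 m with hm | hm
    · have hn : n ≤ 0 := by
        by_contra! hn
        linarith [hmul hm ha, hmul hn hc]
      rw [abs_of_pos (Int.cast_pos.mpr hm), abs_of_nonpos (Int.cast_nonpos.mpr hn), neg_mul,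
        sub_neg_eq_add, abs_of_pos hx0]
    · have hn : 0 ≤ n := by
        by_contra! hn
        have hn' : (n : ℝ) ≤ 0 := Int.cast_nonpos.mpr hn.le
        nlinarith [mul_nonneg (neg_nonneg.mpr (Int.cast_nonpos (R := ℝ).mpr hm)) ha.le]
      rw [abs_of_nonpos (Int.cast_nonpos.mpr hm), abs_of_nonneg (Int.cast_nonneg hn), neg_mul,
        ← neg_add', abs_neg, abs_of_pos hx0]
  exact ⟨m.natAbs, n.natAbs, abs_pos.mp (habs ▸ hx0), habs ▸ hxε⟩

/-- Starting from `m * a - n * c`, one stays inside the interval by adding `c` on the left of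
`(a - c) / 2` and subtracting `a` on the right of it; irrationality keeps one off that point. -/
lemma apply_nat_mul_sub_nat_mul {α : Type*} {g : ℝ → α} (ha : 0 < a) (hc : 0 < c)
    (hirr : Irrational (a / c))
    (hg : ∀ p, p = a ∨ p = c → ∀ s, -((a + c) / 2) < s - p → s < (a + c) / 2 → g (s - p) = g s)
    (m n : ℕ) (hmn : |m * a - n * c| < (a + c) / 2) : g (m * a - n * c) = g 0 := by
  induction hN : m + n generalizing m n with
  | zero =>
    obtain ⟨rfl, rfl⟩ := Nat.add_eq_zero_iff.mp hN
    simp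
  | succ N ih =>
    have hmul {k : ℕ} {t : ℝ} (ht : 0 < t) (hk : k ≠ 0) : t ≤ k * t :=
      le_mul_of_one_le_left ht.le (mod_cast Nat.one_le_iff_ne_zero.mpr hk)
    obtain ⟨hlow, hup⟩ := abs_lt.mp hmn
    rcases lt_trichotomy (m * a - n * c : ℝ) ((a - c) / 2) with hlt | heq | hgt
    · obtain ⟨n, rfl⟩ : ∃ k, n = k + 1 := Nat.exists_eq_succ_of_ne_zero fun hn => by
        subst hn
        linarith [hmul ha (k := m) (by lia), Nat.cast_zero (R := ℝ)]
      push_cast at hlow hup hlt ⊢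
      rw [← ih m n (by rw [abs_lt]; grind) (by lia),
        ← hg c (.inr rfl) (m * a - n * c) (by linarith) (by linarith)]
      ring_nf
    · refine absurd ?_ (int_mul_ne_int_mul_of_irrational_div hc.ne' hirr (m := 2 * m - 1) (by lia)
        (2 * n - 1))
      push_cast
      linarith
    · obtain ⟨m, rfl⟩ : ∃ k, m = k + 1 := Nat.exists_eq_succ_of_ne_zero fun hm => by
        subst hm
        linarith [hmul hc (k := n) (by lia), Nat.cast_zero (R := ℝ)]
      push_cast at hlow hup hgt ⊢
      rw [← ih m n (by rw [abs_lt]; grind) (by lia),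
        ← hg a (.inl rfl) ((m + 1) * a - n * c) (by linarith) (by linarith)]
      ring_nf

lemma eq_apply_zero_of_sub_mul_I_eq {G : ℂ → ℂ} (ha : 0 < a) (hc : 0 < c)
    (hirr : Irrational (a / c)) (hG : DifferentiableOn ℂ G {x | |x.im| < (a + c) / 2})
    (hper : ∀ p : ℝ, p = a ∨ p = c → ∀ x : ℂ, -((a + c) / 2) < x.im - p → x.im < (a + c) / 2 →
      G (x - I * p) = G x)
    {x : ℂ} (hx : |x.im| < (a + c) / 2) : G x = G 0 := by
  have hconv : Convex ℝ {x : ℂ | |x.im| < (a + c) / 2} := by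
    simpa only [abs_lt, Set.ofPred_and]
      using (convex_halfSpace_im_gt _).inter (convex_halfSpace_im_lt _)
  have hopen : IsOpen {x : ℂ | |x.im| < (a + c) / 2} := isOpen_lt (by fun_prop) continuous_const
  have hlattice (m n : ℕ) (hmn : |m * a - n * c| < (a + c) / 2) :
      G (I * (m * a - n * c : ℝ)) = G 0 := by
    refine (apply_nat_mul_sub_nat_mul (g := fun s => G (I * s)) ha hc hirr ?_ m n hmn).trans
      (by simp)
    intro p hp s hlow hup
    simpa [mul_sub] using hper p hp (I * s) (by simpa using hlow) (by simpa using hup)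
  refine (hG.analyticOnNhd hopen).eqOn_of_preconnected_of_frequently_eq analyticOnNhd_const
    hconv.isPreconnected (z₀ := 0) (by simpa using by linarith) ?_ hx
  rw [(nhdsWithin_hasBasis Metric.nhds_basis_ball _).frequently_iff]
  intro ε hε
  obtain ⟨m, n, hne, hlt⟩ := exists_nat_mul_sub_nat_mul_lt ha hc hirr
    (lt_min hε (by linarith : 0 < (a + c) / 2))
  refine ⟨I * (m * a - n * c : ℝ), ⟨?_, mul_ne_zero I_ne_zero (ofReal_ne_zero.mpr hne)⟩,
    hlattice m n (hlt.trans_le (min_le_right _ _))⟩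
  rw [mem_ball_zero_iff, norm_mul, norm_I, one_mul, norm_real]
  exact hlt.trans_le (min_le_left _ _)

end Incommensurable

namespace IsEbContinuation

variable {b : ℝ} {f : ℂ → ℂ}

lemma sub_mul_I (h : IsEbContinuation b f) {p : ℝ} (hp : p = b ∨ p = b⁻¹) {x : ℂ}
    (hx : x.im < (b + b⁻¹) / 2) :
    f (x - I * p) = (1 + cexp (2 * π * p * x - π * I * p ^ 2)) * f x := by
  have hb0 : (b : ℂ) ≠ 0 := ofReal_ne_zero.mpr h.pos.ne'
  have hshift := h.shiftedEb_sub_period hp (y := x - cb b)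
    (.inr (by rw [sub_im, cb_im]; linarith))
  have hexponent : 2 * π * p * (x - cb b) = 2 * π * p * x - π * I * p ^ 2 - π * I := by
    rcases hp with rfl | rfl <;> simp only [cb, ofReal_inv] <;> field
  rw [hexponent, Complex.exp_sub _ (π * I), exp_pi_mul_I, div_neg, div_one,
    sub_neg_eq_add] at hshift
  simpa only [shiftedEb, sub_right_comm _ (cb b), sub_add_cancel] using hshift

lemma exists_staircaseTransform_eq_const_mul (h : IsEbContinuation b f) (hirr : Irrational (b ^ 2))
    {η : ℝ} (hη : η ∈ Set.Ioo (-min b b⁻¹) 0) :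
    ∃ C : ℂ, ∀ x : ℂ, |x.im| < (b + b⁻¹) / 2 → staircaseTransform b f η x = C * f x := by
  have hb := h.pos
  have hb' := inv_pos.mpr hb
  have hηQ : η ∈ Set.Ioo (-(b + b⁻¹)) 0 := ⟨by grind, hη.2⟩
  refine ⟨staircaseTransform b f η 0 / f 0, fun x hx => (div_eq_iff (h.ne_zero hx)).mp ?_⟩
  refine eq_apply_zero_of_sub_mul_I_eq (G := fun x => staircaseTransform b f η x / f x) hb hb'
    (by rwa [div_inv_eq_mul, ← sq]) ?_ ?_ hx
  · intro x hx
    exact ((h.differentiableAt_staircaseTransform hηQ hx).div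
      (h.analyticAt x (notMem_ebPoles hb (.inr (abs_lt.mp hx).2))).differentiableAt
      (h.ne_zero hx)).differentiableWithinAt
  · intro p hp x hlow hup
    have hp0 := h.period_pos hp
    have hne : f (x - I * p) ≠ 0 := h.ne_zero (by simp [abs_lt]; constructor <;> linarith)
    rw [h.sub_mul_I hp hup] at hne
    simp only [h.staircaseTransform_sub_mul_I hp hη hlow hup, h.sub_mul_I hp hup]
    exact mul_div_mul_left _ _ (left_ne_zero_of_mul hne)

end IsEbContinuation

/-! ### The Gaussian integral along a staircase -/

lemma norm_exp_neg_mul_sq (a u : ℂ) : ‖cexp (-(a * u ^ 2))‖ =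
    rexp (-(a.re * (u.re ^ 2 - u.im ^ 2)) + 2 * a.im * (u.re * u.im)) := by
  rw [Complex.norm_exp]
  congr 1
  simp [sq]
  ring

lemma exists_norm_exp_neg_mul_sq_le {a : ℂ} (ha : 0 < a.re) (V : ℝ) : ∃ M > 0, ∀ u : ℂ,
    |u.im| ≤ V → ‖cexp (-(a * u ^ 2))‖ ≤ M * rexp (-|u.re|) := by
  set B := 2 * |a.im| * V + 1
  refine ⟨rexp (a.re * V ^ 2 + B ^ 2 / (4 * a.re)), exp_pos _, fun u hu => ?_⟩
  rw [norm_exp_neg_mul_sq, ← Real.exp_add, Real.exp_le_exp]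
  have hsq : u.im ^ 2 ≤ V ^ 2 := sq_le_sq' (abs_le.mp hu).1 (abs_le.mp hu).2
  have hcross : a.im * (u.re * u.im) ≤ |a.im| * (|u.re| * V) := by
    refine (le_abs_self _).trans ?_
    rw [abs_mul, abs_mul]
    gcongr
  have hyoung : B * |u.re| ≤ a.re * u.re ^ 2 + B ^ 2 / (4 * a.re) := by
    rw [← sub_nonneg, ← sq_abs u.re]
    have hsquare : a.re * |u.re| ^ 2 + B ^ 2 / (4 * a.re) - B * |u.re| =
        (2 * a.re * |u.re| - B) ^ 2 / (4 * a.re) := by field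
    rw [hsquare]
    positivity
  have := mul_le_mul_of_nonneg_left hsq ha.le
  simp only [B] at hyoung ⊢
  linarith

lemma hasLeftDecay_exp_neg_mul_sq {a : ℂ} (ha : 0 < a.re) (c η η' : ℝ) :
    HasLeftDecay (fun u => cexp (-(a * u ^ 2))) c η η' where
  differentiableAt _ _ := by fun_prop
  exists_norm_le := by
    obtain ⟨M, hM, hbound⟩ := exists_norm_exp_neg_mul_sq_le ha (max |η ⊓ η'| |η ⊔ η'|)
    refine ⟨M, 1, one_pos, fun y hy =>
      (hbound y (abs_le_max_abs_abs hy.2.1 hy.2.2)).trans ?_⟩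
    gcongr
    linarith [neg_le_abs y.re]

lemma hasRightDecay_exp_neg_mul_sq {a : ℂ} (ha : 0 < a.re) (c η η' : ℝ) :
    HasRightDecay (fun u => cexp (-(a * u ^ 2))) c η η' where
  differentiableAt _ _ := by fun_prop
  exists_norm_le := by
    obtain ⟨M, hM, hbound⟩ := exists_norm_exp_neg_mul_sq_le ha (max |η ⊓ η'| |η ⊔ η'|)
    refine ⟨M, 1, one_pos, fun y hy =>
      (hbound y (abs_le_max_abs_abs hy.2.1 hy.2.2)).trans ?_⟩
    gcongr
    linarith [le_abs_self y.re]

lemma staircaseIntegral_exp_neg_mul_sq {a : ℂ} (ha : 0 < a.re) (c η₁ η₂ : ℝ) :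
    staircaseIntegral (fun u => cexp (-(a * u ^ 2))) c η₁ η₂ = (π / a) ^ (1 / 2 : ℂ) := by
  have hleft := hasLeftDecay_exp_neg_mul_sq ha c η₁ 0
  have hright := hasRightDecay_exp_neg_mul_sq ha c η₂ 0
  rw [staircaseIntegral_eq_of_decay (fun s => by fun_prop) hleft hright,
    ← integral_gaussian_complex ha]
  simp only [staircaseIntegral, leftRayIntegral, verticalIntegral, rightRayIntegral,
    intervalIntegral.integral_same, mul_zero, add_zero]
  rw [intervalIntegral.integral_Iic_add_Ioi (hleft.integrableOn Set.right_mem_uIcc)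
    (hright.integrableOn Set.right_mem_uIcc)]
  simp only [ofReal_zero, zero_mul, add_zero, neg_mul]

lemma staircaseIntegrable_exp_neg_pi_mul_I_mul_sq {η₁ η₂ : ℝ} (h₁ : 0 < η₁) (h₂ : η₂ < 0) :
    StaircaseIntegrable (fun u => cexp (-(π * I * u ^ 2))) 0 η₁ η₂ := by
  refine .of_decay (η₁' := η₁) (η₂' := η₂) (fun s => by fun_prop)
    ⟨fun y _ => by fun_prop, 1, 2 * π * η₁, mul_pos two_pi_pos h₁, fun y hy => ?_⟩
    ⟨fun y _ => by fun_prop, 1, 2 * π * -η₂, mul_pos two_pi_pos (neg_pos.mpr h₂), fun y hy => ?_⟩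
  · obtain rfl : y.im = η₁ := by simpa using hy.2
    rw [norm_exp_neg_pi_mul_I_mul_sq]
    ring_nf
    rfl
  · obtain rfl : y.im = η₂ := by simpa using hy.2
    rw [norm_exp_neg_pi_mul_I_mul_sq]
    ring_nf
    rfl

lemma tendsto_staircaseIntegral_exp_neg_mul_sq {η₁ η₂ : ℝ} (h₁ : 0 < η₁) (h₂ : η₂ < 0) :
    Tendsto (fun e : ℝ => staircaseIntegral (fun u => cexp (-((e + π * I) * u ^ 2))) 0 η₁ η₂)
      (𝓝[>] 0) (𝓝 (staircaseIntegral (fun u => cexp (-(π * I * u ^ 2))) 0 η₁ η₂)) := by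
  have hlim := tendsto_staircaseIntegral_mul (F := 𝓝[>] 0) (M := rexp (η₁ ^ 2 + η₂ ^ 2))
    (ψ := fun e u => cexp (-((e : ℝ) * u ^ 2))) (ψ₀ := fun _ => 1)
    (staircaseIntegrable_exp_neg_pi_mul_I_mul_sq h₁ h₂)
    (.of_forall fun e => by fun_prop) ?_ ?_
  · simpa only [one_mul, ← Complex.exp_add, ← neg_add, ← add_mul] using hlim
  · filter_upwards [Ioo_mem_nhdsGT one_pos] with e he u hu
    have him := im_mem_uIcc_of_mem_staircase hu
    rw [Set.uIcc_of_ge (h₂.le.trans h₁.le)] at him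
    rw [norm_exp_neg_mul_sq, exp_le_exp, ofReal_re, ofReal_im]
    have hsq : u.im ^ 2 ≤ η₁ ^ 2 + η₂ ^ 2 := by
      rcases le_total 0 u.im with h | h <;> nlinarith [him.1, him.2]
    nlinarith [mul_nonneg he.1.le (sq_nonneg u.re), mul_le_of_le_one_left (sq_nonneg u.im) he.2.le]
  · intro u _
    have hcont : ContinuousAt (fun e : ℝ => cexp (-(e * u ^ 2))) 0 := by fun_prop
    simpa using hcont.tendsto.mono_left nhdsWithin_le_nhds

lemma staircaseIntegral_exp_neg_pi_mul_I_mul_sq {η₁ η₂ : ℝ} (h₁ : 0 < η₁) (h₂ : η₂ < 0) :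
    staircaseIntegral (fun u => cexp (-(π * I * u ^ 2))) 0 η₁ η₂ = cexp (-(π * I / 4)) := by
  have hpi : (π : ℂ) ≠ 0 := ofReal_ne_zero.mpr pi_ne_zero
  have hquot : (π : ℂ) / ((0 : ℝ) + π * I) = -I := by
    rw [ofReal_zero, zero_add, div_mul_cancel_left₀ hpi, inv_I]
  have hroot : (-I) ^ (1 / 2 : ℂ) = cexp (-(π * I / 4)) := by
    rw [cpow_def_of_ne_zero (neg_ne_zero.mpr I_ne_zero), log_neg_I]
    congr 1
    ring
  have hcont : ContinuousAt (fun e : ℝ => ((π : ℂ) / (e + π * I)) ^ (1 / 2 : ℂ)) 0 :=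
    (ContinuousAt.div (by fun_prop) (by fun_prop) (by simp [hpi])).cpow continuousAt_const
      (by rw [Pi.div_apply, hquot]; simp [mem_slitPlane_iff])
  have hlim := hcont.tendsto.mono_left (nhdsWithin_le_nhds (s := Set.Ioi 0))
  rw [hquot, hroot] at hlim
  refine tendsto_nhds_unique (tendsto_staircaseIntegral_exp_neg_mul_sq h₁ h₂) (hlim.congr' ?_)
  filter_upwards [self_mem_nhdsWithin] with e he
  exact (staircaseIntegral_exp_neg_mul_sq (by simpa using he) 0 η₁ η₂).symm

/-! ### The constant of proportionality -/

namespace IsEbContinuation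

variable {b : ℝ} {f : ℂ → ℂ}

/-- Completing the square with `y = u - X`. -/
lemma staircaseTransform_ofReal (h : IsEbContinuation b f) {η : ℝ}
    (hη : η ∈ Set.Ioo (-(b + b⁻¹)) 0) {X : ℝ} (hX : 1 ≤ X) :
    staircaseTransform b f η X = cexp (π * I * X ^ 2) *
      staircaseIntegral (fun u => shiftedEb b f (u - X) * cexp (-(π * I * u ^ 2))) 0
        ((b + b⁻¹) / 2) η := by
  have hQ := h.add_inv_pos
  have hXim : |(X : ℂ).im| < (b + b⁻¹) / 2 := by simpa using by linarith
  have hkernel (u : ℂ) : fourierKernel b f X (u - X) =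
      cexp (π * I * X ^ 2) * (shiftedEb b f (u - X) * cexp (-(π * I * u ^ 2))) := by
    rw [fourierKernel, ← mul_assoc, ← Complex.exp_add, mul_comm (shiftedEb b f _), ← mul_assoc,
      ← Complex.exp_add]
    ring_nf
  rw [staircaseTransform, staircaseIntegral_eq_of_corner_le (c := -1) (c' := 0 - X) (by linarith)
    (h.staircaseIntegrable_fourierKernel (by norm_num) hη hXim).left
    (h.staircaseIntegrable_fourierKernel (by linarith) hη hXim).right
    fun y hy => h.differentiableAt_fourierKernel X (.inl (hy.1.2.trans_lt (by norm_num)).ne),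
    ← staircaseIntegral_sub_real, ← staircaseIntegral_const_mul]
  simp only [hkernel]

lemma exists_norm_shiftedEb_line_le (h : IsEbContinuation b f) {η : ℝ}
    (hη : η ∈ Set.Ioo (-((b + b⁻¹) / 2)) 0) :
    ∃ M, ∀ y : ℂ, y.im = η → ‖shiftedEb b f y‖ ≤ M := by
  have hQ := h.add_inv_pos
  obtain ⟨κ, hκ, hκη⟩ := exists_between (lt_min (neg_pos.mpr hη.2) (half_pos hQ))
  obtain ⟨M, -, hleft⟩ := h.exists_norm_shiftedEb_le_strip hκ
  obtain ⟨N, hN, hright⟩ := h.exists_norm_shiftedEb_le_exp_strip hκ 0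
  obtain ⟨hκη, hκQ⟩ := lt_min_iff.mp hκη
  refine ⟨max M N, fun y hy => ?_⟩
  rcases le_total y.re 0 with hre | hre
  · exact (hleft y (by linarith [hη.1]) (by linarith) hre).trans (le_max_left _ _)
  · refine (hright y (by linarith [hη.1]) (by linarith) (by simpa using hre)).trans
      (le_trans (mul_le_of_le_one_right hN.le ?_) (le_max_right _ _))
    rw [exp_le_one_iff, neg_mul, neg_mul, neg_nonpos]
    exact mul_nonneg two_pi_pos.le (mul_nonneg hre (by linarith [hη.1]))

lemma exists_norm_shiftedEb_sub_le (h : IsEbContinuation b f) {η : ℝ}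
    (hη : η ∈ Set.Ioo (-((b + b⁻¹) / 2)) 0) : ∃ M, ∀ X : ℝ, 1 ≤ X →
      ∀ u ∈ staircase 0 ((b + b⁻¹) / 2) η, ‖shiftedEb b f (u - X)‖ ≤ M := by
  have hQ := h.add_inv_pos
  obtain ⟨M, hline⟩ := h.exists_norm_shiftedEb_line_le hη
  obtain ⟨N, -, hleft⟩ := h.exists_norm_shiftedEb_le one_pos (half_pos hQ)
  refine ⟨max M N, fun X hX u hu => ?_⟩
  have him := im_mem_uIcc_of_mem_staircase hu
  rw [Set.uIcc_of_ge (by linarith [hη.2])] at him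
  rcases re_le_or_im_eq_of_mem_staircase hu with hre | himη
  · refine (hleft _ ?_ ?_ ?_).trans (le_max_right _ _) <;> simp <;> linarith [hη.1, him.1, him.2]
  · exact (hline _ (by simpa using himη)).trans (le_max_left _ _)

lemma tendsto_staircaseIntegral_shiftedEb_sub (h : IsEbContinuation b f) {η : ℝ}
    (hη : η ∈ Set.Ioo (-((b + b⁻¹) / 2)) 0) :
    Tendsto (fun X : ℝ => staircaseIntegral (fun u => shiftedEb b f (u - X) *
      cexp (-(π * I * u ^ 2))) 0 ((b + b⁻¹) / 2) η) atTop (𝓝 (cexp (-(π * I / 4)))) := by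
  have hQ := h.add_inv_pos
  obtain ⟨M, hM⟩ := h.exists_norm_shiftedEb_sub_le hη
  rw [← staircaseIntegral_exp_neg_pi_mul_I_mul_sq (half_pos hQ) hη.2]
  simpa only [one_mul] using tendsto_staircaseIntegral_mul (ψ₀ := fun _ => 1)
    (staircaseIntegrable_exp_neg_pi_mul_I_mul_sq (half_pos hQ) hη.2) (F := atTop)
    (ψ := fun (X : ℝ) u => shiftedEb b f (u - X))
    (by
      filter_upwards [eventually_ge_atTop 1] with X hX u hu
      refine (ContinuousAt.comp (f := fun u : ℂ => u - X) (h.differentiableAt_shiftedEb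
        ?_).continuousAt (by fun_prop)).continuousWithinAt
      exact (re_le_or_im_eq_of_mem_staircase hu).imp
        (fun hre => by simpa using by linarith) (fun him => by simpa [him] using hη.2))
    (by filter_upwards [eventually_ge_atTop 1] with X hX using hM X hX)
    (fun u hu => by
      have him := im_mem_uIcc_of_mem_staircase hu
      rw [Set.uIcc_of_ge (by linarith [hη.2])] at him
      exact h.tendsto_shiftedEb (by linarith [him.1, hη.1]) (by linarith [him.2]))

lemma staircaseTransform_eq (h : IsEbContinuation b f) (hirr : Irrational (b ^ 2)) {η : ℝ}
    (hη : η ∈ Set.Ioo (-min b b⁻¹) 0) {x : ℂ} (hx : |x.im| < (b + b⁻¹) / 2) :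
    staircaseTransform b f η x = cexp (-(π * I / 4)) / inversionConst b * f x := by
  have hQ := h.add_inv_pos
  have hηQ : η ∈ Set.Ioo (-((b + b⁻¹) / 2)) 0 :=
    ⟨by linarith [hη.1, min_le_left b b⁻¹, min_le_right b b⁻¹], hη.2⟩
  obtain ⟨C, hC⟩ := h.exists_staircaseTransform_eq_const_mul hirr hη
  suffices C * inversionConst b = cexp (-(π * I / 4)) by
    rw [hC x hx, ← this, mul_div_cancel_right₀ _ (inversionConst_ne_zero b)]
  have hreflect : Tendsto (fun X : ℝ => f (-X)) atTop (𝓝 1) := by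
    simpa [shiftedEb, sub_add_eq_add_sub] using h.tendsto_shiftedEb (u := -cb b)
      (by simp only [neg_im, cb_im]; linarith) (by simp only [neg_im, cb_im]; linarith)
  have hlim := (h.tendsto_staircaseIntegral_shiftedEb_sub hηQ).mul hreflect
  rw [mul_one] at hlim
  refine tendsto_nhds_unique (tendsto_const_nhds.congr' ?_) hlim
  filter_upwards [eventually_ge_atTop 1] with X hX
  have htransform := h.staircaseTransform_ofReal (η := η) ⟨by linarith [hηQ.1], hη.2⟩ hX
  rw [hC X (by simpa using half_pos hQ)] at htransform
  have hinv := h.mul_apply_neg (z := X) (.inl (by simpa using half_pos hQ))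
  refine mul_left_cancel₀ (Complex.exp_ne_zero (π * I * X ^ 2)) ?_
  linear_combination f (-X) * htransform - C * hinv

end IsEbContinuation

lemma kernelConst_mul_div_inversionConst {b : ℝ} (hb : b ≠ 0) :
    kernelConst b * (cexp (-(π * I / 4)) / inversionConst b) = zeta0 b := by
  have hb0 : (b : ℂ) ≠ 0 := ofReal_ne_zero.mpr hb
  have hsq : cb b ^ 2 = -((b : ℂ) + (b : ℂ)⁻¹) ^ 2 / 4 := by
    rw [cb, div_pow, mul_pow, I_sq]
    ring
  rw [kernelConst, inversionConst, zeta0, div_mul_div_comm, ← Complex.exp_add, ← Complex.exp_add,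
    ← Complex.exp_sub, hsq]
  congr 1
  field

/-! ### The semicircular contour -/

lemma isExactOn_slitPlane {k : ℂ → ℂ} (hk : DifferentiableOn ℂ k slitPlane) :
    IsExactOn k slitPlane := by
  set S : Set ℂ := im ⁻¹' Set.Ioo (-π) π
  have hS : IsOpen S := isOpen_Ioo.preimage continuous_im
  have hexp (w : ℂ) (hw : w ∈ S) : cexp w ∈ slitPlane := by
    rw [Complex.exp_mem_slitPlane,
      (toIocMod_eq_self two_pi_pos).mpr ⟨hw.1, by linarith [hw.2]⟩]
    exact hw.2.ne
  have hpull : DifferentiableOn ℂ (fun w => k (cexp w) * cexp w) S :=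
    (hk.comp Complex.differentiable_exp.differentiableOn hexp).mul
      Complex.differentiable_exp.differentiableOn
  obtain ⟨G, hG⟩ := ((convex_Ioo (-π) π).is_linear_preimage
    imLm.isLinear).exists_forall_hasDerivWithinAt hpull
  refine ⟨fun y => G (Complex.log y), fun y hy => ?_⟩
  have hlog : Complex.log y ∈ S :=
    ⟨neg_pi_lt_log_im y, (log_im_le_pi y).lt_of_ne (log_im y ▸ (mem_slitPlane_iff_arg.mp hy).1)⟩
  have hderiv := ((hG _ hlog).hasDerivAt (hS.mem_nhds hlog)).comp y (hasDerivAt_log hy)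
  rwa [Complex.exp_log (slitPlane_ne_zero hy),
    mul_inv_cancel_right₀ (slitPlane_ne_zero hy)] at hderiv

lemma exists_primitive_of_re_ne_zero_or_im_neg {k : ℂ → ℂ}
    (hk : ∀ y : ℂ, y.re ≠ 0 ∨ y.im < 0 → DifferentiableAt ℂ k y) :
    ∃ G : ℂ → ℂ, ∀ y : ℂ, y.re ≠ 0 ∨ y.im < 0 → HasDerivAt G (k y) y := by
  have hrot : DifferentiableOn ℂ (fun w => k (-I * w) * -I) slitPlane := fun w hw => by
    have hkw := hk (-I * w) (by simpa [mem_slitPlane_iff, or_comm] using hw)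
    exact ((hkw.comp w (by fun_prop)).mul_const _).differentiableWithinAt
  obtain ⟨G, hG⟩ := isExactOn_slitPlane hrot
  refine ⟨fun y => G (I * y), fun y hy => ?_⟩
  have hderiv := (hG (I * y) (by simpa [mem_slitPlane_iff, or_comm] using hy)).comp y
    ((hasDerivAt_id y).const_mul I)
  refine hderiv.congr_deriv ?_
  have hrotate : -I * (I * y) = y := by rw [← mul_assoc, neg_mul, I_mul_I, neg_neg, one_mul]
  simp only [hrotate, mul_one]
  rw [mul_assoc, neg_mul, I_mul_I, neg_neg, mul_one]

lemma integral_deriv_mul_comp_eq_sub {k G : ℂ → ℂ} {γ γ' : ℝ → ℂ} {a d : ℝ}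
    (hγ : ∀ s, HasDerivAt γ (γ' s) s) (hγ' : Continuous γ')
    (hG : ∀ s ∈ Set.uIcc a d, HasDerivAt G (k (γ s)) (γ s))
    (hk : ∀ s ∈ Set.uIcc a d, ContinuousAt k (γ s)) :
    ∫ s in a..d, γ' s * k (γ s) = G (γ d) - G (γ a) :=
  intervalIntegral.integral_eq_sub_of_hasDerivAt (f := G ∘ γ)
    (fun s hs => (mul_comm _ _ : k (γ s) * γ' s = _) ▸ (hG s hs).comp s (hγ s))
    (ContinuousOn.intervalIntegrable fun s hs => (hγ'.continuousAt.mul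
      ((hk s hs).comp (hγ s).continuousAt)).continuousWithinAt)

/-- The contour integral of `k` along the semicircle from `-δ` to `δ` below the origin. -/
def lowerSemicircleIntegral (k : ℂ → ℂ) (δ : ℝ) : ℂ :=
  ∫ θ in π..(2 * π), I * δ * cexp (I * θ) * k (δ * cexp (I * θ))

lemma re_ofReal_mul_exp_I_mul (δ θ : ℝ) : (δ * cexp (I * θ)).re = δ * Real.cos θ := by
  rw [mul_comm I, re_ofReal_mul, exp_ofReal_mul_I_re]

lemma im_ofReal_mul_exp_I_mul (δ θ : ℝ) : (δ * cexp (I * θ)).im = δ * Real.sin θ := by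
  rw [mul_comm I, im_ofReal_mul, exp_ofReal_mul_I_im]

lemma lowerSemicircle_re_ne_zero_or_im_neg {δ θ : ℝ} (hδ : 0 < δ) (hθ : θ ∈ Set.Icc π (2 * π)) :
    (δ * cexp (I * θ)).re ≠ 0 ∨ (δ * cexp (I * θ)).im < 0 := by
  have hsin : Real.sin θ ≤ 0 := by
    rw [← sub_add_cancel θ π, Real.sin_add_pi, neg_nonpos]
    exact sin_nonneg_of_nonneg_of_le_pi (by linarith [hθ.1]) (by linarith [hθ.2])
  rw [re_ofReal_mul_exp_I_mul, im_ofReal_mul_exp_I_mul]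
  rcases hsin.lt_or_eq with hneg | hzero
  · exact .inr (mul_neg_of_pos_of_neg hδ hneg)
  · refine .inl (mul_ne_zero hδ.ne' fun hcos => ?_)
    simpa [hzero, hcos] using Real.sin_sq_add_cos_sq θ

lemma lowerSemicircle_re_ne_zero {δ θ : ℝ} (hδ : δ ≠ 0) (hθ : θ ∈ Set.Icc π (2 * π))
    (hbot : θ ≠ 3 * π / 2) : (δ * cexp (I * θ)).re ≠ 0 := by
  have hcos : Real.sin (θ - 3 * π / 2) = Real.cos θ := by
    rw [show θ - 3 * π / 2 = θ - π / 2 - π by ring, Real.sin_sub_pi, Real.sin_sub_pi_div_two,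
      neg_neg]
  rw [re_ofReal_mul_exp_I_mul, ← hcos]
  refine mul_ne_zero hδ fun hzero => hbot (sub_eq_zero.mp ?_)
  exact (sin_eq_zero_iff_of_lt_of_lt (by linarith [hθ.1, pi_pos]) (by linarith [hθ.2, pi_pos])).mp
    hzero

lemma lowerSemicircleIntegral_eq {k : ℂ → ℂ} {δ η : ℝ}
    (hk : ∀ y : ℂ, y.re ≠ 0 ∨ y.im < 0 → DifferentiableAt ℂ k y) (hδ : 0 < δ) (hη : η < 0) :
    lowerSemicircleIntegral k δ = verticalIntegral k (-δ) 0 η +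
      (∫ t in (-δ)..δ, k (t + η * I)) - verticalIntegral k δ 0 η := by
  obtain ⟨G, hG⟩ := exists_primitive_of_re_ne_zero_or_im_neg hk
  have hpath {γ γ' : ℝ → ℂ} {a d : ℝ} (hγ : ∀ s, HasDerivAt γ (γ' s) s) (hγ' : Continuous γ')
      (hmem : ∀ s ∈ Set.uIcc a d, (γ s).re ≠ 0 ∨ (γ s).im < 0) :
      ∫ s in a..d, γ' s * k (γ s) = G (γ d) - G (γ a) :=
    integral_deriv_mul_comp_eq_sub hγ hγ' (fun s hs => hG _ (hmem s hs))
      fun s hs => (hk _ (hmem s hs)).continuousAt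
  have harc : lowerSemicircleIntegral k δ = G δ - G (-δ) := by
    have hderiv (θ : ℝ) : HasDerivAt (fun θ : ℝ => δ * cexp (I * θ)) (I * δ * cexp (I * θ)) θ := by
      have := (((hasDerivAt_id θ).ofReal_comp.const_mul I).cexp).const_mul (δ : ℂ)
      exact this.congr_deriv (by simp only [id, ofReal_one, mul_one]; ring)
    have hle : π ≤ 2 * π := by linarith [pi_pos]
    rw [lowerSemicircleIntegral, hpath hderiv (by fun_prop) fun θ hθ =>
      lowerSemicircle_re_ne_zero_or_im_neg hδ (Set.uIcc_of_le hle ▸ hθ)]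
    simp [mul_comm I, Complex.exp_two_pi_mul_I]
  have hvertical (c : ℝ) (hc : c ≠ 0) : verticalIntegral k c 0 η = G (c + η * I) - G c := by
    have hderiv (s : ℝ) : HasDerivAt (fun s : ℝ => (c + s * I : ℂ)) I s := by
      simpa using ((hasDerivAt_id s).ofReal_comp.mul_const I).const_add (c : ℂ)
    rw [verticalIntegral, ← intervalIntegral.integral_const_mul,
      hpath hderiv continuous_const fun s _ => .inl (by simpa using hc)]
    simp
  have hhorizontal : ∫ t in (-δ)..δ, k (t + η * I) = G (δ + η * I) - G (-δ + η * I) := by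
    have hderiv (t : ℝ) : HasDerivAt (fun t : ℝ => (t + η * I : ℂ)) 1 t := by
      simpa using (hasDerivAt_id t).ofReal_comp.add_const (η * I)
    simpa using hpath (a := -δ) (d := δ) hderiv continuous_const fun t _ => .inr (by simpa using hη)
  rw [harc, hvertical (-δ) (neg_ne_zero.mpr hδ.ne'), hvertical δ hδ.ne', hhorizontal]
  push_cast
  ring

namespace IsEbContinuation

variable {b : ℝ} {f : ℂ → ℂ} {x : ℂ}

lemma tendsto_verticalIntegral_fourierKernel_atBot (h : IsEbContinuation b f) (hx : 0 ≤ x.im) :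
    Tendsto (fun a => verticalIntegral (fourierKernel b f x) a 0 ((b + b⁻¹) / 2)) atBot
      (𝓝 0) := by
  have hQ := h.add_inv_pos
  obtain ⟨M, hM, hbound⟩ := h.exists_norm_shiftedEb_le one_pos (half_pos hQ)
  set E := rexp (2 * π * (|x.re| * (b + b⁻¹)))
  have hnorm {a s : ℝ} (ha : a ≤ -1) (hs : s ∈ Set.uIoc 0 ((b + b⁻¹) / 2)) :
      ‖fourierKernel b f x (a + s * I)‖ ≤ E * rexp (2 * π * ((x.im + s) * a)) * M := by
    obtain ⟨hs0, hsQ⟩ := Set.uIoc_of_le (half_pos hQ).le ▸ hs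
    have hle := norm_fourierKernel_le_of_norm_shiftedEb_le x (y := a + s * I)
      (by simpa [abs_of_pos hs0] using hsQ.trans (half_le_self hQ.le))
      (hbound _ (by simp; linarith) (by simp; linarith) (by simpa using ha))
    simpa using hle
  refine tendsto_verticalIntegral_of_tendsto (M := E * 1 * M) ?_ ?_ fun s hs => ?_
  · filter_upwards [eventually_le_atBot (-1)] with a ha s _
    exact h.continuousAt_fourierKernel_vertical x (by linarith) s
  · filter_upwards [eventually_le_atBot (-1)] with a ha s hs
    have hs0 : 0 < s := (Set.uIoc_of_le (half_pos hQ).le ▸ hs).1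
    refine (hnorm ha hs).trans ?_
    gcongr
    exact exp_le_one_iff.mpr (mul_nonpos_of_nonneg_of_nonpos two_pi_pos.le
      (mul_nonpos_of_nonneg_of_nonpos (by linarith) (by linarith)))
  · have hlim : Tendsto (fun a => E * rexp (2 * π * ((x.im + s) * a)) * M) atBot (𝓝 0) := by
      have hs0 : 0 < s := (Set.uIoc_of_le (half_pos hQ).le ▸ hs).1
      have hrate : Tendsto (fun a => 2 * π * ((x.im + s) * a)) atBot atBot :=
        (tendsto_id.const_mul_atBot (add_pos_of_nonneg_of_pos hx hs0)).const_mul_atBot two_pi_pos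
      simpa using ((tendsto_exp_atBot.comp hrate).const_mul E).mul_const M
    refine squeeze_zero_norm' ?_ hlim
    filter_upwards [eventually_le_atBot (-1)] with a ha using hnorm ha hs

lemma tendsto_integral_left_fourierKernel (h : IsEbContinuation b f) {c : ℝ} (hc : c < 0)
    (hx : 0 ≤ x.im) : Tendsto (fun a : ℝ => ∫ t in a..c, fourierKernel b f x t) atBot
      (𝓝 (leftRayIntegral (fourierKernel b f x) c ((b + b⁻¹) / 2) -
        verticalIntegral (fourierKernel b f x) c 0 ((b + b⁻¹) / 2))) := by
  have hQ := h.add_inv_pos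
  have habs : |(b + b⁻¹) / 2| < b + b⁻¹ := by
    rw [abs_of_pos (half_pos hQ)]
    exact half_lt_self hQ
  have hray := h.hasLeftDecay_fourierKernel (x := x) hc habs habs (by linarith) (by linarith)
  simpa using tendsto_integral_left_of_shift (η := 0)
    (fun y hy => h.differentiableAt_fourierKernel x (.inl (hy.1.trans_lt hc).ne))
    (hray.integrableOn Set.left_mem_uIcc) (h.tendsto_verticalIntegral_fourierKernel_atBot hx)

lemma tendsto_integral_right_fourierKernel (h : IsEbContinuation b f) {c η : ℝ} (hc : 0 < c)
    (hη : η ∈ Set.Ioo (-(b + b⁻¹)) 0) (hx : x.im < (b + b⁻¹) / 2) :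
    Tendsto (fun d : ℝ => ∫ t in c..d, fourierKernel b f x t) atTop
      (𝓝 (verticalIntegral (fourierKernel b f x) c 0 η +
        rightRayIntegral (fourierKernel b f x) c η)) := by
  have hdecay := h.hasRightDecay_fourierKernel_of_pos (η := 0) hc
    ⟨neg_neg_of_pos h.add_inv_pos, le_rfl⟩ ⟨hη.1, hη.2.le⟩ hx
  simpa using tendsto_integral_right_of_shift hdecay.differentiableAt
    (hdecay.integrableOn Set.right_mem_uIcc) hdecay.tendsto_verticalIntegral

lemma staircaseIntegral_fourierKernel_eq (h : IsEbContinuation b f) {c c' η : ℝ} (hc : c < 0)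
    (hcc : c' ≤ c) (hη : η ∈ Set.Ioo (-(b + b⁻¹)) 0) (hx : |x.im| < (b + b⁻¹) / 2) :
    staircaseIntegral (fourierKernel b f x) c ((b + b⁻¹) / 2) η =
      staircaseIntegral (fourierKernel b f x) c' ((b + b⁻¹) / 2) η :=
  staircaseIntegral_eq_of_corner_le hcc (h.staircaseIntegrable_fourierKernel hc hη hx).left
    (h.staircaseIntegrable_fourierKernel (hcc.trans_lt hc) hη hx).right
    fun _ hy => h.differentiableAt_fourierKernel x (.inl (hy.1.2.trans_lt hc).ne)

lemma staircaseTransform_eq_staircaseIntegral (h : IsEbContinuation b f) {c η : ℝ} (hc : c < 0)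
    (hη : η ∈ Set.Ioo (-(b + b⁻¹)) 0) (hx : |x.im| < (b + b⁻¹) / 2) :
    staircaseTransform b f η x =
      staircaseIntegral (fourierKernel b f x) c ((b + b⁻¹) / 2) η := by
  rcases le_total c (-1) with hle | hle
  · exact h.staircaseIntegral_fourierKernel_eq (by norm_num) hle hη hx
  · exact (h.staircaseIntegral_fourierKernel_eq hc hle hη hx).symm

lemma tendsto_integral_fourierKernel (h : IsEbContinuation b f) {δ η : ℝ} (hδ : 0 < δ)
    (hη : η ∈ Set.Ioo (-(b + b⁻¹)) 0) (hx : x.im ∈ Set.Ico 0 ((b + b⁻¹) / 2)) :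
    Tendsto (fun R : ℝ × ℝ => (∫ t in (-R.1)..(-δ), fourierKernel b f x t) +
        lowerSemicircleIntegral (fourierKernel b f x) δ + ∫ t in δ..R.2, fourierKernel b f x t)
      (atTop ×ˢ atTop) (𝓝 (staircaseTransform b f η x)) := by
  set k := fourierKernel b f x
  have habs : |x.im| < (b + b⁻¹) / 2 := by rw [abs_of_nonneg hx.1]; exact hx.2
  have hneg := neg_lt_zero.mpr hδ
  have hleft := (h.tendsto_integral_left_fourierKernel hneg hx.1).comp
    (tendsto_neg_atTop_atBot.comp (tendsto_fst (g := atTop (α := ℝ))))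
  have hright := (h.tendsto_integral_right_fourierKernel hδ hη hx.2).comp
    (tendsto_snd (f := atTop (α := ℝ)))
  have hint := (h.staircaseIntegrable_fourierKernel hneg hη habs).right
  have hray : (∫ t in (-δ)..δ, k (t + η * I)) + rightRayIntegral k δ η =
      rightRayIntegral k (-δ) η := by
    rw [← intervalIntegral.integral_Ioi_sub_Ioi hint (by linarith)]
    exact sub_add_cancel _ _
  have hvert := verticalIntegral_add_adjacent
    (h.continuousAt_fourierKernel_vertical x hneg.ne) ((b + b⁻¹) / 2) 0 η
  have hlimit : staircaseTransform b f η x =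
      leftRayIntegral k (-δ) ((b + b⁻¹) / 2) - verticalIntegral k (-δ) 0 ((b + b⁻¹) / 2) +
        lowerSemicircleIntegral k δ + (verticalIntegral k δ 0 η + rightRayIntegral k δ η) := by
    rw [h.staircaseTransform_eq_staircaseIntegral hneg hη habs, staircaseIntegral, ← hray, ← hvert,
      lowerSemicircleIntegral_eq (fun y hy => h.differentiableAt_fourierKernel x hy) hδ hη.2,
      verticalIntegral_symm k (-δ) 0 ((b + b⁻¹) / 2)]
    ring
  rw [hlimit]
  exact (hleft.add_const _).add hright

end IsEbContinuation

/-- The integrand `e^{-2πixy} e^{2πic_b y} / e_b(-y - c_b)`, where `f` continues `e_b`. -/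
def inversionIntegrand (b : ℝ) (f : ℂ → ℂ) (x y : ℂ) : ℂ :=
  cexp (-2 * π * I * x * y) * cexp (2 * π * I * cb b * y) / f (-y - cb b)

namespace IsEbContinuation

variable {b : ℝ} {f : ℂ → ℂ}

lemma inversionIntegrand_eq (h : IsEbContinuation b f) (x : ℂ) {y : ℂ} (hy : y.re ≠ 0) :
    inversionIntegrand b f x y = kernelConst b * fourierKernel b f x y := by
  rw [inversionIntegrand, mul_div_assoc, h.exp_div_eq_kernelConst_mul (.inl hy), fourierKernel]
  ring_nf

lemma integral_inversionIntegrand (h : IsEbContinuation b f) (x : ℂ) {a d : ℝ}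
    (had : (0 : ℝ) ∉ Set.uIcc a d) : ∫ t in a..d, inversionIntegrand b f x t =
      kernelConst b * ∫ t in a..d, fourierKernel b f x t := by
  rw [← intervalIntegral.integral_const_mul]
  refine intervalIntegral.integral_congr fun t ht => h.inversionIntegrand_eq x ?_
  rw [ofReal_re]
  exact fun hzero => had (hzero ▸ ht)

lemma lowerSemicircleIntegral_inversionIntegrand (h : IsEbContinuation b f) (x : ℂ) {δ : ℝ}
    (hδ : δ ≠ 0) : lowerSemicircleIntegral (inversionIntegrand b f x) δ =
      kernelConst b * lowerSemicircleIntegral (fourierKernel b f x) δ := by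
  rw [lowerSemicircleIntegral, lowerSemicircleIntegral, ← intervalIntegral.integral_const_mul]
  refine intervalIntegral.integral_congr_ae ?_
  filter_upwards [Measure.ae_ne volume (3 * π / 2)] with θ hbot hθ
  rw [Set.uIoc_of_le (by linarith [pi_pos])] at hθ
  rw [h.inversionIntegrand_eq x (lowerSemicircle_re_ne_zero hδ ⟨hθ.1.le, hθ.2⟩ hbot)]
  exact mul_left_comm _ _ _

end IsEbContinuation

theorem statement8_general {b : ℝ} {f : ℂ → ℂ} (h : IsEbContinuation b f)
    (hirr : Irrational (b ^ 2)) {x : ℂ} (hx : x.im ∈ Set.Ico 0 ((b + b⁻¹) / 2)) {δ : ℝ}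
    (hδ : 0 < δ) :
    Tendsto (fun R : ℝ × ℝ => (∫ t in (-R.1)..(-δ), inversionIntegrand b f x t) +
        lowerSemicircleIntegral (inversionIntegrand b f x) δ +
        ∫ t in δ..R.2, inversionIntegrand b f x t)
      (atTop ×ˢ atTop) (𝓝 (zeta0 b * eb b x)) := by
  have hmin : 0 < min b b⁻¹ := lt_min h.pos (inv_pos.mpr h.pos)
  have hη : -(min b b⁻¹ / 2) ∈ Set.Ioo (-min b b⁻¹) 0 := ⟨by linarith, by linarith⟩
  have hηQ : -(min b b⁻¹ / 2) ∈ Set.Ioo (-(b + b⁻¹)) 0 :=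
    ⟨by linarith [min_le_left b b⁻¹, inv_pos.mpr h.pos], hη.2⟩
  have habs : |x.im| < (b + b⁻¹) / 2 := by rw [abs_of_nonneg hx.1]; exact hx.2
  have hlimit : kernelConst b * staircaseTransform b f (-(min b b⁻¹ / 2)) x =
      zeta0 b * eb b x := by
    rw [h.staircaseTransform_eq hirr hη habs, h.eq_eb x habs, ← mul_assoc,
      kernelConst_mul_div_inversionConst h.pos.ne']
  rw [← hlimit]
  refine ((h.tendsto_integral_fourierKernel hδ hηQ hx).const_mul (kernelConst b)).congr' ?_
  have hcutoff := (eventually_gt_atTop (0 : ℝ)).prod_mk (eventually_gt_atTop (0 : ℝ))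
  filter_upwards [hcutoff] with R hR
  rw [h.lowerSemicircleIntegral_inversionIntegrand x hδ.ne',
    h.integral_inversionIntegrand x (Set.notMem_uIcc_of_gt (neg_lt_zero.mpr hR.1)
      (neg_lt_zero.mpr hδ)),
    h.integral_inversionIntegrand x (Set.notMem_uIcc_of_lt hδ hR.2)]
  ring

/-- the Fourier-type integral representation
`∫_{γ_δ} e^{−2πixy}·e^{2πic_b y}/e_b(−y−c_b) dy = ζ₀·e_b(x)` where `γ_δ` is the real axis
with the segment `[−δ,δ]` replaced by the semicircle of radius `δ` below the origin,
and `e_b` under the integral denotes the meromorphic continuation `f` of `e_b`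
(characterized by the stated hypotheses). The improper integral is a limit over
cutoffs `R, R' → ∞`; since the limit is the same for every admissible `δ`, it is in
particular independent of `δ`. -/
theorem statement8 (b : ℝ) (hb : 0 < b) (hirr : Irrational (b ^ 2))
    (f : ℂ → ℂ)
    (hf_ext : ∀ z : ℂ, |z.im| < (b + b⁻¹) / 2 → f z = eb b z)
    (hf_an : ∀ z : ℂ, z ∉ ebPoles b → AnalyticAt ℂ f z)
    (hf_shift₁ : ∀ z : ℂ, z - Complex.I * (b : ℂ) / 2 ∉ ebPoles b →
      z + Complex.I * (b : ℂ) / 2 ∉ ebPoles b →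
      f (z - Complex.I * (b : ℂ) / 2) =
        (1 + Complex.exp (2 * (π : ℂ) * (b : ℂ) * z)) * f (z + Complex.I * (b : ℂ) / 2))
    (hf_shift₂ : ∀ z : ℂ, z - Complex.I * (b : ℂ)⁻¹ / 2 ∉ ebPoles b →
      z + Complex.I * (b : ℂ)⁻¹ / 2 ∉ ebPoles b →
      f (z - Complex.I * (b : ℂ)⁻¹ / 2) =
        (1 + Complex.exp (2 * (π : ℂ) * (b : ℂ)⁻¹ * z)) *
          f (z + Complex.I * (b : ℂ)⁻¹ / 2))
    (x δ : ℝ) (hδ₁ : 0 < δ) (hδ₂ : δ < min b b⁻¹) :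
    Tendsto
      (fun R : ℝ × ℝ =>
        (∫ t in (-R.1)..(-δ),
          Complex.exp (-2 * (π : ℂ) * Complex.I * (x : ℂ) * (t : ℂ)) *
            Complex.exp (2 * (π : ℂ) * Complex.I * cb b * (t : ℂ)) /
              f (-(t : ℂ) - cb b)) +
        (∫ θ in (π : ℝ)..(2 * π),
          (Complex.I * (δ : ℂ) * Complex.exp (Complex.I * (θ : ℂ))) *
            (Complex.exp (-2 * (π : ℂ) * Complex.I * (x : ℂ) *
                ((δ : ℂ) * Complex.exp (Complex.I * (θ : ℂ)))) *
              Complex.exp (2 * (π : ℂ) * Complex.I * cb b *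
                ((δ : ℂ) * Complex.exp (Complex.I * (θ : ℂ)))) /
              f (-((δ : ℂ) * Complex.exp (Complex.I * (θ : ℂ))) - cb b))) +
        (∫ t in δ..R.2,
          Complex.exp (-2 * (π : ℂ) * Complex.I * (x : ℂ) * (t : ℂ)) *
            Complex.exp (2 * (π : ℂ) * Complex.I * cb b * (t : ℂ)) /
              f (-(t : ℂ) - cb b)))
      (atTop ×ˢ atTop) (𝓝 (zeta0 b * eb b (x : ℂ))) := by
  have hx : (x : ℂ).im ∈ Set.Ico 0 ((b + b⁻¹) / 2) := by
    simpa using (by positivity : 0 < (b + b⁻¹) / 2)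
  exact statement8_general ⟨hb, hf_ext, hf_an, hf_shift₁, hf_shift₂⟩ hirr hx hδ₁

end
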